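/- arXiv:2507.23766 — 2 statements merged into one kernel-verified Lean document; each statement's English description precedes it below -/
import Mathlib

section
/- Let T be the 2-torus and J a 1-complex (embedded finite graph) on T. Let u, v be a basis of H₁(T; ℤ). If the complement T − J contains no closed curve representing the class v, then J contains a closed curve representing a class au + bv with a ≠ 0. -/
/-!
STATEMENT 8: Let `T` be the 2-torus and `J` a 1-complex (embedded finite graph)
on `T`.  Let `u, v` be a basis of `H₁(T; ℤ)`.  If the complement `T − J`
contains no closed curve representing the class `v`, then `J` contains a closed
curve representing a class `au + bv` with `a ≠ 0`.

Model: the torus is `𝕋 = (ℝ/ℤ) × (ℝ/ℤ)`; since `π₁(𝕋)` is abelian, `H₁(𝕋; ℤ)`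
is canonically `π₁(𝕋, x)`, written multiplicatively, and "a basis `u, v`" means
every element is uniquely `u^a * v^b`.  A subset contains a representative of a
class `w` if it contains a closed curve whose class in `π₁(𝕋, x)` — after
conjugating back to the basepoint along some path, which is immaterial since
the group is abelian — is `w`.  A 1-complex on `𝕋` is a finite union of
embedded arcs. -/

open scoped Topology

/-- The 2-torus `(ℝ/ℤ) × (ℝ/ℤ)`. -/
abbrev Torus2 : Type := AddCircle (1 : ℝ) × AddCircle (1 : ℝ)

/-- `RepresentsIn x w S` : the subset `S` of the torus contains a closed curve
representing the homology class `w ∈ H₁(𝕋) = π₁(𝕋, x)`: there is a loop `ℓ`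
with image in `S` which, joined to the basepoint `x` by a path `p`, gives the
class `w`. -/
def RepresentsIn (x : TopCat.of Torus2)
    (w : FundamentalGroup (TopCat.of Torus2) x) (S : Set Torus2) : Prop :=
  ∃ (y : Torus2) (ℓ : Path y y) (p : Path x y),
    Set.range ℓ ⊆ S ∧
    FundamentalGroup.fromPath ⟦(p.trans ℓ).trans p.symm⟧ = w

/-- `IsOneComplex J` : `J` is a finite 1-complex (embedded finite graph) on the
torus, i.e. a finite union of embedded arcs. -/
def IsOneComplex (J : Set Torus2) : Prop :=
  ∃ (n : ℕ) (a b : Fin n → Torus2) (γ : ∀ i, Path (a i) (b i)),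
    (∀ i, Function.Injective (γ i)) ∧ J = ⋃ i, Set.range (γ i)

open scoped unitInterval in
theorem oc_angle_stay (θ : C(I, ℝ)) (c : ℝ) (h0 : θ 0 + c ∈ Set.Icc (-(Real.pi/2)) (Real.pi/2))
    (h : ∀ t, 0 ≤ Real.cos (θ t + c)) (t : I) :
    θ t + c ∈ Set.Icc (-(Real.pi/2)) (Real.pi/2) := by
  have hpi := Real.pi_pos
  by_contra hcon
  have hconn : IsPreconnected (Set.range (fun t => θ t + c)) :=
    isPreconnected_range (by fun_prop)
  have hoc := hconn.ordConnected
  have hneg : ∀ y, y ∈ Set.range (fun t => θ t + c) → 0 ≤ Real.cos y := by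
    rintro _ ⟨t, rfl⟩; exact h t
  rw [Set.mem_Icc, not_and_or, not_le, not_le] at hcon
  rcases hcon with hcon | hcon
  · have hm : max (θ t + c) (-Real.pi) ∈ Set.range (fun t => θ t + c) := by
      refine hoc.out ⟨t, rfl⟩ ⟨0, rfl⟩ ⟨le_max_left _ _, ?_⟩
      simp only [max_le_iff]; exact ⟨by linarith [h0.1], by linarith [h0.1]⟩
    have := hneg _ hm
    have h2 : Real.cos (max (θ t + c) (-Real.pi)) < 0 := by
      rw [← Real.cos_neg]
      apply Real.cos_neg_of_pi_div_two_lt_of_lt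
      · rw [lt_neg, max_lt_iff]; constructor <;> linarith
      · have := le_max_right (θ t + c) (-Real.pi); linarith
    linarith
  · have hm : min (θ t + c) (Real.pi) ∈ Set.range (fun t => θ t + c) := by
      refine hoc.out ⟨0, rfl⟩ ⟨t, rfl⟩ ⟨?_, min_le_left _ _⟩
      simp only [le_min_iff]; exact ⟨by linarith [h0.2], by linarith [h0.2]⟩
    have := hneg _ hm
    have h2 : Real.cos (min (θ t + c) (Real.pi)) < 0 := by
      apply Real.cos_neg_of_pi_div_two_lt_of_lt
      · rw [lt_min_iff]; constructor <;> linarith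
      · have := min_le_right (θ t + c) (Real.pi); linarith
    linarith

open scoped unitInterval in
theorem oc_miranda (f g : I × I → ℝ) (hf : Continuous f) (hg : Continuous g)
    (f0 : ∀ t, f (0, t) ≤ 0) (f1 : ∀ t, 0 ≤ f (1, t))
    (g0 : ∀ t, g (t, 0) ≤ 0) (g1 : ∀ t, 0 ≤ g (t, 1)) : ∃ p, f p = 0 ∧ g p = 0 := by
  by_contra hcon
  push Not at hcon
  have hpi := Real.pi_pos
  have hne : ∀ p, (⟨f p, g p⟩ : ℂ) ≠ 0 := by
    intro p hp
    rw [Complex.ext_iff] at hp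
    exact hcon p hp.1 hp.2
  have hcF : Continuous (fun p => (⟨f p, g p⟩ : ℂ)) := by
    have : (fun p => (⟨f p, g p⟩ : ℂ)) = fun p => (f p : ℂ) + (g p : ℂ) * Complex.I := by
      ext p; rw [← Complex.mk_eq_add_mul_I]
    rw [this]; fun_prop
  let F : C(I × I, {z : ℂ // z ≠ 0}) := ⟨fun p => ⟨⟨f p, g p⟩, hne p⟩, by
    exact hcF.subtype_mk _⟩
  obtain ⟨e₀, he₀⟩ : ∃ e₀ : ℂ, Complex.exp e₀ = (⟨f (0,0), g (0,0)⟩ : ℂ) :=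
    ⟨Complex.log _, Complex.exp_log (hne _)⟩
  let P : C(ℝ × ℝ, I × I) := ⟨fun q => (Set.projIcc 0 1 zero_le_one q.1,
    Set.projIcc 0 1 zero_le_one q.2), by
      exact (continuous_projIcc.comp continuous_fst).prodMk
        (continuous_projIcc.comp continuous_snd)⟩
  have hP : ∀ p : I × I, P (p.1, p.2) = p := by
    intro p
    simp [P]
  have hsc : SimplyConnectedSpace (ℝ × ℝ) := inferInstance
  obtain ⟨G', ⟨hG0, hG'⟩, -⟩ :=
    Complex.isCoveringMap_exp.existsUnique_continuousMap_lifts (F.comp P) (0,0) e₀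
    (Subtype.ext (by
      have := hP (0,0)
      simp only [Set.Icc.coe_zero] at this
      simp [this, he₀, F]))
  let G : C(I × I, ℂ) := ⟨fun p => G' (p.1, p.2), by fun_prop⟩
  have hG : ∀ p, (⟨Complex.exp (G p), Complex.exp_ne_zero _⟩ : {z : ℂ // z ≠ 0}) = F p := by
    intro p
    have := congrFun hG' (p.1, p.2)
    simpa [hP, G] using this
  have key : ∀ p, Complex.exp (G p) = ⟨f p, g p⟩ := by
    intro p
    have := hG p
    exact congrArg Subtype.val this
  have hre : ∀ p, f p = Real.exp (G p).re * Real.cos (G p).im := by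
    intro p
    rw [← Complex.exp_re, key]
  have him : ∀ p, g p = Real.exp (G p).re * Real.sin (G p).im := by
    intro p
    rw [← Complex.exp_im, key]
  let θ : C(I × I, ℝ) := ⟨fun p => (G p).im, by fun_prop⟩
  have cneg : ∀ p, f p ≤ 0 → Real.cos (θ p) ≤ 0 := fun p h => by
    rw [hre] at h; exact nonpos_of_mul_nonpos_right h (Real.exp_pos _)
  have cpos : ∀ p, 0 ≤ f p → 0 ≤ Real.cos (θ p) := fun p h => by
    rw [hre] at h; exact nonneg_of_mul_nonneg_right h (Real.exp_pos _)
  have sneg : ∀ p, g p ≤ 0 → Real.sin (θ p) ≤ 0 := fun p h => by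
    rw [him] at h; exact nonpos_of_mul_nonpos_right h (Real.exp_pos _)
  have spos : ∀ p, 0 ≤ g p → 0 ≤ Real.sin (θ p) := fun p h => by
    rw [him] at h; exact nonneg_of_mul_nonneg_right h (Real.exp_pos _)
  -- normalise the angle at the corner
  obtain ⟨k, hk⟩ : ∃ k : ℤ, θ (0,0) + k * (2 * Real.pi) ∈ Set.Ico 0 (2 * Real.pi) := by
    have := existsUnique_add_zsmul_mem_Ico (a := 2 * Real.pi) (by positivity) (θ (0,0)) 0
    obtain ⟨k, hk, -⟩ := this
    exact ⟨k, by simpa using hk⟩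
  set c : ℝ := k * (2 * Real.pi) with hc
  have hcc : ∀ y, Real.cos (y + c) = Real.cos y := fun y => Real.cos_add_int_mul_two_pi y k
  have hss : ∀ y, Real.sin (y + c) = Real.sin y := fun y => Real.sin_add_int_mul_two_pi y k
  -- corner (0,0) lies in [π, 3π/2]
  have hA1 : Real.pi ≤ θ (0,0) + c := by
    by_contra! hlt
    have h1 := sneg (0,0) (g0 0)
    rw [← hss] at h1
    have h0 : θ (0,0) + c = 0 := by
      by_contra h0
      have : 0 < Real.sin (θ (0,0) + c) :=
        Real.sin_pos_of_pos_of_lt_pi (lt_of_le_of_ne hk.1 (Ne.symm h0)) hlt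
      linarith
    have h2 := cneg (0,0) (f0 0)
    rw [← hcc, h0, Real.cos_zero] at h2
    linarith
  have hA2 : θ (0,0) + c ≤ 3 * Real.pi / 2 := by
    by_contra! hlt
    have h2 := cneg (0,0) (f0 0)
    rw [← hcc, ← Real.cos_sub_two_pi] at h2
    have : 0 < Real.cos (θ (0,0) + c - 2 * Real.pi) :=
      Real.cos_pos_of_mem_Ioo ⟨by linarith, by linarith [hk.2]⟩
    linarith
  -- four sides
  have e1 : ∀ y, Real.cos (y + (c - Real.pi)) = - Real.cos y := fun y => by
    rw [← add_sub_assoc, Real.cos_sub_pi, hcc]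
  have e2 : ∀ y, Real.cos (y + (c - 3 * Real.pi / 2)) = - Real.sin y := fun y => by
    rw [show y + (c - 3 * Real.pi / 2) = (y + c + Real.pi/2) - 2 * Real.pi by ring,
      Real.cos_sub_two_pi, Real.cos_add_pi_div_two, hss]
  have e3 : ∀ y, Real.cos (y + (c - 2 * Real.pi)) = Real.cos y := fun y => by
    rw [← add_sub_assoc, Real.cos_sub_two_pi, hcc]
  have e4 : ∀ y, Real.cos (y + (c - 5 * Real.pi / 2)) = Real.sin y := fun y => by
    rw [show y + (c - 5 * Real.pi / 2) = (y + c - Real.pi/2) - 2 * Real.pi by ring,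
      Real.cos_sub_two_pi, Real.cos_sub_pi_div_two, hss]
  have hL := oc_angle_stay ⟨fun t => θ (0, t), by fun_prop⟩ (c - Real.pi)
    (by constructor <;> simp only [ContinuousMap.coe_mk] <;> linarith)
    (fun t => by
      simp only [ContinuousMap.coe_mk]; rw [e1]; linarith [cneg (0,t) (f0 t)]) 1
  have hB := oc_angle_stay ⟨fun t => θ (t, 0), by fun_prop⟩ (c - 3 * Real.pi / 2)
    (by constructor <;> simp only [ContinuousMap.coe_mk] <;> linarith)
    (fun t => by
      simp only [ContinuousMap.coe_mk]; rw [e2]; linarith [sneg (t,0) (g0 t)]) 1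
  simp only [ContinuousMap.coe_mk, Set.mem_Icc] at hL hB
  have hB' : 3 * Real.pi / 2 ≤ θ (1,0) + c := by
    by_contra! hlt
    have h2 := cpos (1,0) (f1 0)
    have h3 : 0 < Real.cos (θ (1,0) + (c - Real.pi)) :=
      Real.cos_pos_of_mem_Ioo ⟨by linarith, by linarith⟩
    rw [e1] at h3
    linarith
  have hR := oc_angle_stay ⟨fun t => θ (1, t), by fun_prop⟩ (c - 2 * Real.pi)
    (by constructor <;> simp only [ContinuousMap.coe_mk] <;> linarith)
    (fun t => by
      simp only [ContinuousMap.coe_mk]; rw [e3]; exact cpos (1,t) (f1 t)) 1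
  simp only [ContinuousMap.coe_mk, Set.mem_Icc] at hR
  have hR' : 2 * Real.pi ≤ θ (1,1) + c := by
    by_contra! hlt
    have h2 := spos (1,1) (g1 1)
    have h3 : 0 < Real.cos (θ (1,1) + (c - 3 * Real.pi / 2)) :=
      Real.cos_pos_of_mem_Ioo ⟨by linarith, by linarith⟩
    rw [e2] at h3
    linarith
  have hT := oc_angle_stay ⟨fun t => θ (σ t, 1), by fun_prop⟩ (c - 5 * Real.pi / 2)
    (by constructor <;> simp only [ContinuousMap.coe_mk, unitInterval.symm_zero] <;> linarith)
    (fun t => by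
      simp only [ContinuousMap.coe_mk]; rw [e4]; exact spos (σ t,1) (g1 _)) 1
  simp only [ContinuousMap.coe_mk, Set.mem_Icc, unitInterval.symm_one] at hT
  linarith

theorem oc_label {V : Type*} [AddCommGroup V] (e : V) (r : V → V → Prop)
    (symm : ∀ p q, r p q → r q p) (trans : ∀ p q s, r p q → r q s → r p s)
    (inv : ∀ p q (d : ℤ), r p q → r (p + d • e) (q + d • e))
    (free : ∀ p (d : ℤ), r p (p + d • e) → d = 0) :
    ∃ l : V → ℤ, (∀ p q, r p q → l p = l q) ∧ ∀ p (d : ℤ), r p p → l (p + d • e) = l p + d := by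
  classical
  let R : V → V → Prop := fun p q => ∃ d : ℤ, r (p + d • e) q
  have Rcongr : ∀ p q, R p q → R p = R q := by
    rintro p q ⟨d, hd⟩
    ext s
    constructor
    · rintro ⟨d', h'⟩
      refine ⟨d' - d, ?_⟩
      have h1 := symm _ _ (inv _ _ (d' - d) hd)
      have h2 : p + d • e + (d' - d) • e = p + d' • e := by rw [sub_smul]; abel
      rw [h2] at h1
      exact trans _ _ _ h1 h'
    · rintro ⟨d', h'⟩
      refine ⟨d + d', ?_⟩
      have h1 := inv _ _ d' hd
      have h2 : p + d • e + d' • e = p + (d + d') • e := by rw [add_smul]; abel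
      rw [h2] at h1
      exact trans _ _ _ h1 h'
  let rep : V → V := fun p => Classical.epsilon (R p)
  have hrep : ∀ p, r p p → R p (rep p) := fun p hp =>
    Classical.epsilon_spec (p := R p) ⟨p, 0, by simpa using hp⟩
  let l : V → ℤ := fun p => - Classical.epsilon (fun d : ℤ => r (p + d • e) (rep p))
  have hl : ∀ p, r p p → r (p + (- l p) • e) (rep p) := fun p hp => by
    have := Classical.epsilon_spec (p := fun d : ℤ => r (p + d • e) (rep p)) (hrep p hp)
    simpa [l] using this
  have uniq : ∀ p s (d d' : ℤ), r (p + d • e) s → r (p + d' • e) s → d = d' := by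
    intro p s d d' h h'
    have h1 := inv _ _ (-d) (trans _ _ _ h (symm _ _ h'))
    have h2 : p + d • e + (-d) • e = p := by rw [neg_smul]; abel
    have h3 : p + d' • e + (-d) • e = p + (d' - d) • e := by rw [neg_smul, sub_smul]; abel
    rw [h2, h3] at h1
    have := free _ _ h1
    omega
  refine ⟨l, ?_, ?_⟩
  · intro p q hpq
    have hpp := trans _ _ _ hpq (symm _ _ hpq)
    have hqq := trans _ _ _ (symm _ _ hpq) hpq
    have hR : rep p = rep q := by
      have : R p = R q := Rcongr p q ⟨0, by simpa using hpq⟩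
      simp only [rep, this]
    have h1 := hl p hpp
    have h2 := hl q hqq
    rw [hR] at h1
    have h3 := trans _ _ _ (inv _ _ (- l q) hpq) h2
    have := uniq _ _ _ _ h1 h3
    omega
  · intro p d hpp
    have hqq := inv p p d hpp
    have hR : rep p = rep (p + d • e) := by
      have : R p = R (p + d • e) := Rcongr _ _ ⟨d, hqq⟩
      simp only [rep, this]
    have h1 := hl p hpp
    have h2 := hl _ hqq
    rw [← hR] at h2
    have h3 : p + d • e + (- l (p + d • e)) • e = p + (d - l (p + d • e)) • e := by
      rw [neg_smul, sub_smul]; abel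
    rw [h3] at h2
    have := uniq _ _ _ _ h1 h2
    omega

theorem oc_joinedIn_shift {S : Set (ℝ × ℝ)} (w : ℝ × ℝ) (hS : ∀ p ∈ S, p + w ∈ S) {p q : ℝ × ℝ}
    (h : JoinedIn S p q) : JoinedIn S (p + w) (q + w) := by
  obtain ⟨γ, hγ⟩ := h
  exact ⟨γ.map (f := fun z => z + w) (by fun_prop), fun t => hS _ (hγ t)⟩

open scoped unitInterval in
/-- A connected translation-invariant set cannot be disjoint from intermediate translates. -/
theorem oc_translate (U : Set (ℝ × ℝ)) (hU : ∀ p ∈ U, ∀ k : ℤ, p + (0, (k : ℝ)) ∈ U)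
    (p : ℝ × ℝ) (d : ℤ) (hd : d ≠ 0) (h : JoinedIn U p (p + (0, (d : ℝ)))) :
    ∃ q, JoinedIn U q (q + (0, 1)) := by
  wlog hpos : 0 < d generalizing d p
  · refine this (p + (0, (d : ℝ))) (-d) (by omega) ?_ (by omega)
    have : p + (0, (d : ℝ)) + (0, ((-d : ℤ) : ℝ)) = p := by
      ext <;> simp
    rw [this]
    exact h.symm
  obtain ⟨γ, hγ⟩ := h
  have hIpc : PathConnectedSpace I := isPathConnected_iff_pathConnectedSpace.1
    ((convex_Icc (0 : ℝ) 1).isPathConnected ⟨0, by simp⟩)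
  let V : Set (ℝ × ℝ) := {q | ∃ (t : I) (m : ℤ), q = γ t + (0, (m * d : ℝ))}
  have hVU : V ⊆ U := by
    rintro _ ⟨t, m, rfl⟩
    have := hU _ (hγ t) (m * d)
    simpa using this
  have hVs : ∀ m : ℤ, ∀ q ∈ V, q + (0, (m * d : ℝ)) ∈ V := by
    rintro m _ ⟨t, m', rfl⟩
    refine ⟨t, m' + m, ?_⟩
    ext <;> simp; ring
  have hrV : ∀ t, γ t ∈ V := fun t => ⟨t, 0, by ext <;> simp⟩
  have hj0 : ∀ t, JoinedIn V p (γ t) := by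
    intro t
    have h1 : IsPathConnected (Set.range γ) := isPathConnected_range γ.continuous
    exact (h1.joinedIn p ⟨0, by simp⟩ _ ⟨t, rfl⟩).mono (by rintro _ ⟨t, rfl⟩; exact hrV t)
  have hjn : ∀ n : ℕ, JoinedIn V p (p + (0, (n * d : ℝ))) := by
    intro n
    induction n with
    | zero =>
      have h2 : p + (0, ((0 : ℕ) * d : ℝ)) = γ 0 := by ext <;> simp
      rw [h2]; exact hj0 0
    | succ n ih =>
      refine ih.trans ?_
      have h1 := oc_joinedIn_shift (0, (n * d : ℝ)) (by simpa using hVs n) (hj0 1)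
      have h2 : γ 1 + (0, (n * d : ℝ)) = p + (0, ((n + 1 : ℕ) * d : ℝ)) := by
        ext <;> simp; ring
      rwa [h2] at h1
  have hjz : ∀ m : ℤ, JoinedIn V p (p + (0, (m * d : ℝ))) := by
    intro m
    obtain ⟨n, rfl | rfl⟩ := m.eq_nat_or_neg
    · simpa using hjn n
    · have h1 := oc_joinedIn_shift (0, ((-n : ℤ) * d : ℝ)) (hVs (-n)) (hjn n)
      have h2 : p + (0, (n * d : ℝ)) + (0, ((-n : ℤ) * d : ℝ)) = p := by
        ext <;> simp
      rw [h2] at h1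
      exact h1.symm
  have hjV : ∀ q ∈ V, JoinedIn V p q := by
    rintro _ ⟨t, m, rfl⟩
    exact (hjz m).trans (oc_joinedIn_shift _ (hVs m) (hj0 t))
  -- extreme points
  obtain ⟨smin, -, hmin⟩ := isCompact_univ.exists_isMinOn (f := fun t => (γ t).1)
    (Set.univ_nonempty (α := I)) (by fun_prop)
  obtain ⟨smax, -, hmax⟩ := isCompact_univ.exists_isMaxOn (f := fun t => (γ t).1)
    (Set.univ_nonempty (α := I)) (by fun_prop)
  have hmin' : ∀ q ∈ V, (γ smin).1 ≤ q.1 := by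
    rintro _ ⟨t, m, rfl⟩
    simpa using hmin (Set.mem_univ t)
  have hmax' : ∀ q ∈ V, q.1 ≤ (γ smax).1 := by
    rintro _ ⟨t, m, rfl⟩
    simpa using hmax (Set.mem_univ t)
  obtain ⟨B, hB⟩ := isCompact_univ.exists_bound_of_continuousOn (f := fun t => (γ t).2)
    (by fun_prop : ContinuousOn _ (Set.univ : Set I))
  have h1 : IsPathConnected (Set.range γ) := isPathConnected_range γ.continuous
  obtain ⟨β, hβ⟩ := h1.joinedIn _ ⟨smin, rfl⟩ _ ⟨smax, rfl⟩
  obtain ⟨N, hN⟩ := exists_nat_ge (B + 1 + |p.2|)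
  have hdN : (N : ℝ) ≤ N * d := by
    have : (1 : ℝ) ≤ d := by exact_mod_cast hpos
    have h0 : (0 : ℝ) ≤ N := by positivity
    nlinarith
  have hα : JoinedIn V (p + (0, ((-N : ℤ) * d : ℝ))) (p + (0, ((N : ℤ) * d : ℝ))) :=
    (hjz _).symm.trans (hjz _)
  obtain ⟨α, hα⟩ := hα
  have hβB : ∀ t, |(β t).2| ≤ B := by
    intro t
    obtain ⟨s, hs⟩ := hβ t
    rw [← hs]
    exact hB s (Set.mem_univ _)
  obtain ⟨⟨t, s⟩, h1, h2⟩ := oc_miranda (fun z => (β z.1).1 - (α z.2).1)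
    (fun z => (α z.2).2 - ((β z.1).2 + 1)) (by fun_prop) (by fun_prop)
    (fun s => by simpa using hmin' _ (hα s)) (fun s => by simpa using hmax' _ (hα s))
    (fun t => by
      have h1 := abs_le.1 (hβB t)
      have h2 := abs_le.1 (le_refl |p.2|)
      simp
      linarith) (fun t => by
      have h1 := abs_le.1 (hβB t)
      have h2 := abs_le.1 (le_refl |p.2|)
      simp
      linarith)
  have heq : α s = β t + (0, 1) := by
    ext
    · simp at h1 ⊢; linarith
    · simp at h2 ⊢; linarith
  refine ⟨β t, ?_⟩
  have hβV : β t ∈ V := by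
    obtain ⟨s, hs⟩ := hβ t
    rw [← hs]; exact hrV s
  rw [← heq]
  exact ((hjV _ hβV).symm.trans (hjV _ (hα s))).mono hVU

theorem oc_sep (A B : Set (ℝ × ℝ)) (hA : IsClosed A) (hB : IsClosed B) (hAB : Disjoint A B)
    (hAn : A.Nonempty) (hBn : B.Nonempty) :
    Continuous (fun p => Metric.infDist p A - Metric.infDist p B) ∧
    (∀ p ∈ A, Metric.infDist p A - Metric.infDist p B < 0) ∧
    (∀ p ∈ B, 0 < Metric.infDist p A - Metric.infDist p B) := by
  refine ⟨(Metric.continuous_infDist_pt A).sub (Metric.continuous_infDist_pt B), ?_, ?_⟩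
  · intro p hp
    have h1 := (hB.notMem_iff_infDist_pos hBn).1 (Set.disjoint_left.1 hAB hp)
    rw [Metric.infDist_zero_of_mem hp]; linarith
  · intro p hp
    have h1 := (hA.notMem_iff_infDist_pos hAn).1 (Set.disjoint_right.1 hAB hp)
    rw [Metric.infDist_zero_of_mem hp]; linarith

theorem oc_infDist_shift (A : Set (ℝ × ℝ)) (w : ℝ × ℝ) (h1 : ∀ p ∈ A, p + w ∈ A)
    (h2 : ∀ p ∈ A, p - w ∈ A) (p : ℝ × ℝ) : Metric.infDist (p + w) A = Metric.infDist p A := by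
  have hi : Isometry (fun z : ℝ × ℝ => z + w) := isometry_add_right w
  have := Metric.infDist_image hi (x := p) (t := A)
  rw [← this]
  congr 1
  ext q
  constructor
  · intro hq
    exact ⟨q - w, h2 q hq, by simp⟩
  · rintro ⟨q, hq, rfl⟩
    exact h1 q hq

open scoped unitInterval in
/-- The lifted complex. -/
def ocLift {n : ℕ} (Γ : Fin n → C(I, ℝ × ℝ)) : Set (ℝ × ℝ) :=
  {p | ∃ i t, ∃ z : ℤ × ℤ, p = Γ i t + ((z.1 : ℝ), (z.2 : ℝ))}

open scoped unitInterval in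
theorem ocLift_shift {n : ℕ} (Γ : Fin n → C(I, ℝ × ℝ)) (a b : ℤ) (p : ℝ × ℝ) :
    p + ((a : ℝ), (b : ℝ)) ∈ ocLift Γ ↔ p ∈ ocLift Γ := by
  constructor
  · rintro ⟨i, t, z, h⟩
    refine ⟨i, t, (z.1 - a, z.2 - b), ?_⟩
    rw [← eq_sub_iff_add_eq] at h
    rw [h]; ext <;> simp <;> ring
  · rintro ⟨i, t, z, rfl⟩
    refine ⟨i, t, (z.1 + a, z.2 + b), ?_⟩
    ext <;> simp <;> ring

open scoped unitInterval in
theorem ocLift_bound {n : ℕ} (Γ : Fin n → C(I, ℝ × ℝ)) : ∃ B : ℝ, 0 ≤ B ∧ ∀ i t, ‖Γ i t‖ ≤ B := by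
  have h : ∀ i, ∃ B : ℝ, ∀ t, ‖Γ i t‖ ≤ B := by
    intro i
    obtain ⟨B, hB⟩ := isCompact_univ.exists_bound_of_continuousOn (f := Γ i)
      (by fun_prop : ContinuousOn _ (Set.univ : Set I))
    exact ⟨B, fun t => hB t (Set.mem_univ _)⟩
  choose B hB using h
  refine ⟨∑ i, |B i|, by positivity, fun i t => (hB i t).trans ((le_abs_self _).trans ?_)⟩
  exact Finset.single_le_sum (f := fun i => |B i|) (fun i _ => abs_nonneg _) (Finset.mem_univ i)

open scoped unitInterval in
theorem ocLift_closed {n : ℕ} (Γ : Fin n → C(I, ℝ × ℝ)) (S : Set (Fin n × ℤ × ℤ)) :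
    IsClosed {p : ℝ × ℝ | ∃ i t, ∃ z : ℤ × ℤ, (i, z) ∈ S ∧
      p = Γ i t + ((z.1 : ℝ), (z.2 : ℝ))} := by
  obtain ⟨B, hB0, hB⟩ := ocLift_bound Γ
  let f : S → Set (ℝ × ℝ) := fun s =>
    Set.range (fun t => Γ s.1.1 t + ((s.1.2.1 : ℝ), (s.1.2.2 : ℝ)))
  have hf : {p : ℝ × ℝ | ∃ i t, ∃ z : ℤ × ℤ, (i, z) ∈ S ∧
      p = Γ i t + ((z.1 : ℝ), (z.2 : ℝ))} = ⋃ s, f s := by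
    ext p
    simp only [Set.mem_ofPred_eq, Set.mem_iUnion, f, Set.mem_range]
    constructor
    · rintro ⟨i, t, z, hz, rfl⟩
      exact ⟨⟨(i, z), hz⟩, t, rfl⟩
    · rintro ⟨⟨⟨i, z⟩, hz⟩, t, rfl⟩
      exact ⟨i, t, z, hz, rfl⟩
  rw [hf]
  refine LocallyFinite.isClosed_iUnion ?_ (fun s => (isCompact_range (by fun_prop)).isClosed)
  intro p
  refine ⟨Metric.ball p 1, Metric.ball_mem_nhds _ one_pos, ?_⟩
  obtain ⟨K, hK⟩ := exists_nat_ge (‖p‖ + 1 + B)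
  have hfin : (Set.univ ×ˢ (Set.Icc (-K : ℤ) K ×ˢ Set.Icc (-K : ℤ) K) :
      Set (Fin n × ℤ × ℤ)).Finite :=
    Set.finite_univ.prod ((Set.finite_Icc _ _).prod (Set.finite_Icc _ _))
  refine Set.Finite.subset (hfin.preimage (f := Subtype.val) Subtype.val_injective.injOn) ?_
  rintro ⟨⟨i, z⟩, hz⟩ ⟨q, ⟨t, rfl⟩, hq⟩
  have h1 : ‖(((z.1 : ℝ), (z.2 : ℝ)) : ℝ × ℝ)‖ ≤ K := by
    rw [mem_ball_iff_norm] at hq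
    have e : (((z.1 : ℝ), (z.2 : ℝ)) : ℝ × ℝ)
      = (Γ i t + ((z.1 : ℝ), (z.2 : ℝ)) - p) + p - Γ i t := by abel
    rw [e]
    have h2 := norm_sub_le ((Γ i t + ((z.1 : ℝ), (z.2 : ℝ)) - p) + p) (Γ i t)
    have h3 := norm_add_le (Γ i t + ((z.1 : ℝ), (z.2 : ℝ)) - p) p
    have h4 := hB i t
    simp only at hq
    linarith
  have h2 := abs_le.1 ((norm_fst_le _).trans h1)
  have h3 := abs_le.1 ((norm_snd_le _).trans h1)
  simp only at h2 h3
  simp only [Set.mem_preimage, Set.mem_prod, Set.mem_univ, true_and, Set.mem_Icc]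
  refine ⟨⟨?_, ?_⟩, ?_, ?_⟩
  · exact_mod_cast h2.1
  · exact_mod_cast h2.2
  · exact_mod_cast h3.1
  · exact_mod_cast h3.2

/-- The annulus theorem: disjoint periodic closed sets containing the two ends. -/
theorem oc_annulus (O L R : Set (ℝ × ℝ)) (M : ℝ) (_hM : 0 < M) (hO : IsOpen O)
    (hOs : ∀ p ∈ O, ∀ k : ℤ, p + (0, (k : ℝ)) ∈ O)
    (hL : IsClosed L) (hR : IsClosed R) (hLR : Disjoint L R)
    (hLs : ∀ p ∈ L, ∀ k : ℤ, p + (0, (k : ℝ)) ∈ L) (hRs : ∀ p ∈ R, ∀ k : ℤ, p + (0, (k : ℝ)) ∈ R)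
    (hLM : ∀ p : ℝ × ℝ, p.1 ≤ -M → p ∈ L) (hRM : ∀ p : ℝ × ℝ, M ≤ p.1 → p ∈ R)
    (hc : ∀ p, p ∉ L → p ∉ R → p ∈ O) : ∃ q, JoinedIn O q (q + (0, 1)) := by
  by_contra hcon
  have hno : ∀ p (d : ℤ), JoinedIn O p (p + (0, (d : ℝ))) → d = 0 := by
    intro p d h
    by_contra hd
    exact hcon (oc_translate O hOs p d hd h)
  have hsm : ∀ d : ℤ, d • ((0, 1) : ℝ × ℝ) = (0, (d : ℝ)) := by
    intro d; ext <;> simp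
  obtain ⟨l, hl1, hl2⟩ := oc_label ((0, 1) : ℝ × ℝ) (JoinedIn O) (fun p q h => h.symm)
    (fun p q s h h' => h.trans h')
    (fun p q d h => by
      rw [hsm]; exact oc_joinedIn_shift _ (fun p hp => hOs p hp d) h)
    (fun p d h => hno p d (by rwa [hsm] at h))
  have hlc : ContinuousOn l O := by
    rw [hO.continuousOn_iff]
    intro p hp
    obtain ⟨ε, hε, hb⟩ := Metric.isOpen_iff.1 hO p hp
    have : l =ᶠ[nhds p] fun _ => l p := by
      filter_upwards [Metric.ball_mem_nhds p hε] with q hq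
      have hpc : IsPathConnected (Metric.ball p ε) :=
        (convex_ball p ε).isPathConnected ⟨p, Metric.mem_ball_self hε⟩
      exact hl1 _ _ ((hpc.joinedIn q hq p (Metric.mem_ball_self hε)).mono hb)
    exact continuousAt_const.congr this.symm
  obtain ⟨fc, fL, fR⟩ := oc_sep L R hL hR hLR ⟨(-M, 0), hLM _ le_rfl⟩ ⟨(M, 0), hRM _ le_rfl⟩
  set f : ℝ × ℝ → ℝ := fun p => Metric.infDist p L - Metric.infDist p R with hf
  let Z : Set (ℝ × ℝ) := {p | f p = 0}
  have hZc : IsClosed Z := isClosed_eq fc continuous_const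
  have hZL : ∀ p ∈ Z, p ∉ L := fun p hp h => by
    have := fL p h; have h2 : f p = 0 := hp; simp only [hf] at h2; linarith
  have hZR : ∀ p ∈ Z, p ∉ R := fun p hp h => by
    have := fR p h; have h2 : f p = 0 := hp; simp only [hf] at h2; linarith
  have hZO : ∀ p ∈ Z, p ∈ O := fun p hp => hc p (hZL p hp) (hZR p hp)
  have hZs : ∀ p ∈ Z, ∀ k : ℤ, p + (0, (k : ℝ)) ∈ Z := by
    intro p hp k
    have hneg : ∀ q : ℝ × ℝ, q - (0, (k : ℝ)) = q + (0, ((-k : ℤ) : ℝ)) := by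
      intro q; ext <;> simp; ring
    change Metric.infDist _ L - Metric.infDist _ R = 0
    rw [oc_infDist_shift L _ (fun p hp => hLs p hp k) (fun p hp => by
        rw [hneg]; exact hLs p hp _),
      oc_infDist_shift R _ (fun p hp => hRs p hp k) (fun p hp => by
        rw [hneg]; exact hRs p hp _)]
    exact hp
  have hZx : ∀ p ∈ Z, p.1 ∈ Set.Icc (-M) M := by
    intro p hp
    constructor
    · by_contra! h; exact hZL p hp (hLM p h.le)
    · by_contra! h; exact hZR p hp (hRM p h.le)
  have hcomp : IsCompact (Z ∩ (Set.Icc (-M) M ×ˢ Set.Icc (0 : ℝ) 1)) :=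
    (isCompact_Icc.prod isCompact_Icc).inter_left hZc
  obtain ⟨K, hK⟩ := hcomp.exists_bound_of_continuousOn (f := l)
    (hlc.mono fun p hp => hZO p hp.1)
  have hKl : ∀ p ∈ Z, |(l p : ℝ) - p.2| ≤ K + 1 := by
    intro p hp
    have hq := hZs p hp (-⌊p.2⌋)
    have h1 := hK _ ⟨hq, by simpa using hZx p hp, by
      have h1 := Int.floor_le p.2
      have h2 := Int.lt_floor_add_one p.2
      simp
      constructor <;> linarith⟩
    have h2 := hl2 p (-⌊p.2⌋) (JoinedIn.refl (hZO p hp))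
    rw [hsm] at h2
    rw [h2, Int.norm_eq_abs] at h1
    push_cast at h1
    have h3 := Int.floor_le p.2
    have h4 := Int.lt_floor_add_one p.2
    rw [abs_le] at h1 ⊢
    constructor <;> linarith
  have hclos : ∀ T : Set ℤ, IsClosed {p | p ∈ Z ∧ l p ∈ T} := by
    intro T
    have : {p | p ∈ Z ∧ l p ∈ T} = Z ∩ l ⁻¹' T := rfl
    rw [this]
    exact (hlc.mono hZO).preimage_isClosed_of_isClosed hZc (isClosed_discrete T)
  set N : ℝ := |K| + 3 with hN
  have hKN := le_abs_self K
  have hK0 := abs_nonneg K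
  let A : Set (ℝ × ℝ) := {p | p ∈ Z ∧ l p ∈ Set.Iic 0} ∪ {p | p.2 ≤ -N}
  let B : Set (ℝ × ℝ) := {p | p ∈ Z ∧ l p ∈ Set.Ici 1} ∪ {p | N ≤ p.2}
  have hAc : IsClosed A := (hclos _).union (isClosed_le continuous_snd continuous_const)
  have hBc : IsClosed B := (hclos _).union (isClosed_le continuous_const continuous_snd)
  have hAB : Disjoint A B := by
    rw [Set.disjoint_left]
    rintro p (⟨hp, h1⟩ | h1) (⟨hp', h2⟩ | h2)
    · simp at h1 h2; omega
    · have h3 := abs_le.1 (hKl p hp)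
      have h4 : (l p : ℝ) ≤ 0 := by exact_mod_cast h1
      simp only [Set.mem_ofPred_eq] at h2
      linarith
    · have h3 := abs_le.1 (hKl p hp')
      have h4 : (1 : ℝ) ≤ l p := by exact_mod_cast h2
      simp only [Set.mem_ofPred_eq] at h1
      linarith
    · simp only [Set.mem_ofPred_eq] at h1 h2
      linarith
  obtain ⟨gc, gA, gB⟩ := oc_sep A B hAc hBc hAB ⟨(0, -N), Or.inr (by simp)⟩
    ⟨(0, N), Or.inr (by simp)⟩
  set g : ℝ × ℝ → ℝ := fun p => Metric.infDist p A - Metric.infDist p B with hg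
  let φ : unitInterval × unitInterval → ℝ × ℝ :=
    fun z => (-M + 2 * M * z.1, -N + 2 * N * z.2)
  have hφ : Continuous φ := by fun_prop
  obtain ⟨z, hz1, hz2⟩ := oc_miranda (f ∘ φ) (g ∘ φ) (fc.comp hφ) (gc.comp hφ)
    (fun t => (fL _ (hLM _ (by simp [φ]))).le)
    (fun t => (fR _ (hRM _ (by simp [φ]; linarith))).le)
    (fun t => (gA _ (Or.inr (by simp [φ]))).le)
    (fun t => (gB _ (Or.inr (by simp [φ]; linarith))).le)
  have hzZ : φ z ∈ Z := hz1
  rcases le_or_gt (l (φ z)) 0 with h | h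
  · have h1 := gA (φ z) (Or.inl ⟨hzZ, h⟩)
    simp only [Function.comp, hg] at hz2
    linarith
  · have h1 := gB (φ z) (Or.inl ⟨hzZ, by simp; omega⟩)
    simp only [Function.comp, hg] at hz2
    linarith

open scoped unitInterval in
theorem oc_planar {n : ℕ} (Γ : Fin n → C(I, ℝ × ℝ))
    (h : ∀ p (a b : ℤ), JoinedIn (ocLift Γ) p (p + ((a : ℝ), (b : ℝ))) → a = 0) :
    ∃ q, JoinedIn (ocLift Γ)ᶜ q (q + (0, 1)) := by
  have hIpc : PathConnectedSpace I := isPathConnected_iff_pathConnectedSpace.1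
    ((convex_Icc (0 : ℝ) 1).isPathConnected ⟨0, by simp⟩)
  set J := ocLift Γ with hJ
  have hsm : ∀ d : ℤ, d • ((1, 0) : ℝ × ℝ) = ((d : ℝ), 0) := by
    intro d; ext <;> simp
  have hsh : ∀ p q (a b : ℤ), JoinedIn J p q →
      JoinedIn J (p + ((a : ℝ), (b : ℝ))) (q + ((a : ℝ), (b : ℝ))) := fun p q a b hpq =>
    oc_joinedIn_shift _ (fun p hp => (ocLift_shift Γ a b p).2 hp) hpq
  obtain ⟨l, hl1, hl2⟩ := oc_label ((1, 0) : ℝ × ℝ)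
    (fun p q => ∃ k : ℤ, JoinedIn J p (q + (0, (k : ℝ))))
    (by
      rintro p q ⟨k, hk⟩
      refine ⟨-k, ?_⟩
      have := (hsh _ _ 0 (-k) hk).symm
      convert this using 1
      · ext <;> simp
      · simp)
    (by
      rintro p q s ⟨k, hk⟩ ⟨k', hk'⟩
      refine ⟨k + k', ?_⟩
      have := hsh _ _ 0 k hk'
      refine hk.trans ?_
      convert this using 1
      · simp
      · ext <;> simp; ring)
    (by
      rintro p q d ⟨k, hk⟩
      refine ⟨k, ?_⟩
      rw [hsm]
      have := hsh _ _ d 0 hk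
      convert this using 1
      · simp
      · ext <;> simp)
    (by
      rintro p d ⟨k, hk⟩
      rw [hsm] at hk
      refine h p d k ?_
      convert hk using 1
      ext <;> simp)
  have hlJ : ∀ i t (z : ℤ × ℤ), l (Γ i t + ((z.1 : ℝ), (z.2 : ℝ))) = l (Γ i 0) + z.1 := by
    intro i t z
    have hm : ∀ t, Γ i t ∈ J := fun t => ⟨i, t, 0, by ext <;> simp⟩
    have h1 : l (Γ i t) = l (Γ i 0) := by
      refine hl1 _ _ ⟨0, ?_⟩
      have h1 : IsPathConnected (Set.range (Γ i)) := isPathConnected_range (Γ i).continuous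
      have := (h1.joinedIn _ ⟨t, rfl⟩ _ ⟨0, rfl⟩).mono (V := J) (by rintro _ ⟨t, rfl⟩; exact hm t)
      have e0 : Γ i 0 + (0, ((0 : ℤ) : ℝ)) = Γ i 0 := by ext <;> simp
      rw [e0]; exact this
    have h2 := hl2 (Γ i t) z.1 ⟨0, by
      have e0 : Γ i t + (0, ((0 : ℤ) : ℝ)) = Γ i t := by ext <;> simp
      rw [e0]; exact JoinedIn.refl (hm t)⟩
    rw [hsm] at h2
    rw [← h1, ← h2]
    refine (hl1 _ _ ⟨z.2, ?_⟩)
    have : Γ i t + ((z.1 : ℝ), 0) + (0, (z.2 : ℝ)) = Γ i t + ((z.1 : ℝ), (z.2 : ℝ)) := by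
      ext <;> simp
    rw [this]
    exact JoinedIn.refl ⟨i, t, z, rfl⟩
  obtain ⟨B, hB0, hB⟩ := ocLift_bound Γ
  have hC : ∃ C : ℝ, 0 ≤ C ∧ ∀ i, |(l (Γ i 0) : ℝ)| ≤ C :=
    ⟨∑ i, |(l (Γ i 0) : ℝ)|, by positivity, fun i =>
      Finset.single_le_sum (f := fun i => |(l (Γ i 0) : ℝ)|) (fun i _ => abs_nonneg _)
        (Finset.mem_univ i)⟩
  obtain ⟨C, hC0, hC⟩ := hC
  have hbd : ∀ p ∈ J, |p.1 - l p| ≤ B + C := by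
    rintro _ ⟨i, t, z, rfl⟩
    rw [hlJ]
    have h1 := abs_le.1 ((norm_fst_le _).trans (hB i t))
    have h2 := abs_le.1 (hC i)
    simp only [Prod.fst_add]
    push_cast
    rw [abs_le]
    constructor <;> linarith
  have hclos : ∀ T : Set ℤ, IsClosed {p | p ∈ J ∧ l p ∈ T} := by
    intro T
    convert ocLift_closed Γ {s | l (Γ s.1 0) + s.2.1 ∈ T} using 1
    ext p
    constructor
    · rintro ⟨⟨i, t, z, rfl⟩, hT⟩
      rw [hlJ] at hT
      exact ⟨i, t, z, hT, rfl⟩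
    · rintro ⟨i, t, z, hT, rfl⟩
      refine ⟨⟨i, t, z, rfl⟩, ?_⟩
      rw [hlJ]; exact hT
  have hlv : ∀ p ∈ J, ∀ k : ℤ, l (p + (0, (k : ℝ))) = l p := by
    rintro _ ⟨i, t, z, rfl⟩ k
    have := hlJ i t (z.1, z.2 + k)
    rw [hlJ, ← this]
    congr 1
    ext <;> simp; ring
  have hJv : ∀ p, ∀ k : ℤ, p + (0, (k : ℝ)) ∈ J ↔ p ∈ J := by
    intro p k
    have := ocLift_shift Γ 0 k p
    simpa using this
  have hJc : IsClosed J := by simpa using hclos Set.univ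
  set M : ℝ := B + C + 1 with hM
  refine oc_annulus Jᶜ ({p | p ∈ J ∧ l p ∈ Set.Iic 0} ∪ {p | p.1 ≤ -M})
    ({p | p ∈ J ∧ l p ∈ Set.Ici 1} ∪ {p | M ≤ p.1}) M (by positivity) hJc.isOpen_compl ?_
    ((hclos _).union (isClosed_le continuous_fst continuous_const))
    ((hclos _).union (isClosed_le continuous_const continuous_fst)) ?_ ?_ ?_ ?_ ?_ ?_
  · intro p hp k h
    exact hp ((hJv p k).1 h)
  · rw [Set.disjoint_left]
    rintro p (⟨hp, h1⟩ | h1) (⟨hp', h2⟩ | h2)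
    · simp at h1 h2; omega
    · have h3 := abs_le.1 (hbd p hp)
      have h4 : (l p : ℝ) ≤ 0 := by exact_mod_cast h1
      simp only [Set.mem_ofPred_eq] at h2
      linarith
    · have h3 := abs_le.1 (hbd p hp')
      have h4 : (1 : ℝ) ≤ l p := by exact_mod_cast h2
      simp only [Set.mem_ofPred_eq] at h1
      linarith
    · simp only [Set.mem_ofPred_eq] at h1 h2
      linarith
  · rintro p (⟨hp, h1⟩ | h1) k
    · exact Or.inl ⟨(hJv p k).2 hp, by rw [hlv p hp]; exact h1⟩
    · exact Or.inr (by simpa using h1)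
  · rintro p (⟨hp, h1⟩ | h1) k
    · exact Or.inl ⟨(hJv p k).2 hp, by rw [hlv p hp]; exact h1⟩
    · exact Or.inr (by simpa using h1)
  · intro p hp; exact Or.inr hp
  · intro p hp; exact Or.inr hp
  · intro p h1 h2 hp
    rcases le_or_gt (l p) 0 with h | h
    · exact h1 (Or.inl ⟨hp, h⟩)
    · exact h2 (Or.inl ⟨hp, by simp; omega⟩)

/-- The covering projection of the torus. -/
def ocE (p : ℝ × ℝ) : Torus2 := ((p.1 : AddCircle (1 : ℝ)), (p.2 : AddCircle (1 : ℝ)))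

theorem ocE_continuous : Continuous ocE :=
  ((AddCircle.continuous_mk' 1).comp continuous_fst).prodMk
    ((AddCircle.continuous_mk' 1).comp continuous_snd)

theorem ocE_surj (x : Torus2) : ∃ p, ocE p = x := by
  obtain ⟨a, b⟩ := x
  obtain ⟨s, rfl⟩ := QuotientAddGroup.mk_surjective a
  obtain ⟨t, rfl⟩ := QuotientAddGroup.mk_surjective b
  exact ⟨(s, t), rfl⟩

theorem ocE_add_int (p : ℝ × ℝ) (z : ℤ × ℤ) : ocE (p + ((z.1 : ℝ), (z.2 : ℝ))) = ocE p := by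
  have h : ∀ (s : ℝ) (k : ℤ), ((s + k : ℝ) : AddCircle (1 : ℝ)) = (s : AddCircle (1 : ℝ)) := by
    intro s k
    refine QuotientAddGroup.eq_iff_sub_mem.2 (AddSubgroup.mem_zmultiples_iff.2 ⟨k, ?_⟩)
    simp
  exact Prod.ext (h _ _) (h _ _)

theorem ocE_eq (p q : ℝ × ℝ) (h : ocE p = ocE q) :
    ∃ z : ℤ × ℤ, p = q + ((z.1 : ℝ), (z.2 : ℝ)) := by
  have h' : ∀ (s t : ℝ), (s : AddCircle (1 : ℝ)) = (t : AddCircle (1 : ℝ)) →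
      ∃ k : ℤ, s = t + k := by
    intro s t hst
    have := (QuotientAddGroup.eq_iff_sub_mem).1 hst
    obtain ⟨k, hk⟩ := AddSubgroup.mem_zmultiples_iff.1 this
    refine ⟨k, ?_⟩
    simp at hk
    linarith
  obtain ⟨k, hk⟩ := h' _ _ (congrArg Prod.fst h)
  obtain ⟨m, hm⟩ := h' _ _ (congrArg Prod.snd h)
  exact ⟨(k, m), Prod.ext hk hm⟩

open scoped unitInterval in
theorem ocE_lift (γ : C(I, Torus2)) (e : ℝ × ℝ) (he : γ 0 = ocE e) :
    ∃ Γ : C(I, ℝ × ℝ), (∀ t, ocE (Γ t) = γ t) ∧ Γ 0 = e := by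
  have cov := AddCircle.isCoveringMap_coe (1 : ℝ)
  obtain ⟨Γ1, h1, h1'⟩ := cov.exists_path_lifts ⟨fun t => (γ t).1, by fun_prop⟩ e.1
    (congrArg Prod.fst he)
  obtain ⟨Γ2, h2, h2'⟩ := cov.exists_path_lifts ⟨fun t => (γ t).2, by fun_prop⟩ e.2
    (congrArg Prod.snd he)
  exact ⟨Γ1.prodMk Γ2, fun t => Prod.ext (congrFun h1 t) (congrFun h2 t), Prod.ext h1' h2'⟩

open scoped unitInterval in
theorem ocE_homotopic_end {a b : Torus2} (γ γ' : Path a b) (h : γ.Homotopic γ')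
    {e f f' : ℝ × ℝ} (Γ : Path e f) (Γ' : Path e f') (hΓ : ∀ t, ocE (Γ t) = γ t)
    (hΓ' : ∀ t, ocE (Γ' t) = γ' t) : f = f' := by
  have cov := AddCircle.isCoveringMap_coe (1 : ℝ)
  have key : ∀ (pr : C(Torus2, AddCircle (1 : ℝ))) (pr' : C(ℝ × ℝ, ℝ)),
      (∀ p, pr (ocE p) = (pr' p : AddCircle (1 : ℝ))) → pr' f = pr' f' := by
    intro pr pr' hpr
    have hh := h.map pr
    have g0 : (γ.map pr.continuous).toContinuousMap 0 = (pr' e : AddCircle (1 : ℝ)) := by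
      rw [← hpr, ← Γ.source, hΓ]; simp
    have g0' : (γ'.map pr.continuous).toContinuousMap 0 = (pr' e : AddCircle (1 : ℝ)) := by
      rw [← hpr, ← Γ'.source, hΓ']; simp
    have := cov.liftPath_apply_one_eq_of_homotopicRel hh (pr' e) g0 g0'
    rw [← (cov.eq_liftPath_iff' g0 (Γ := pr'.comp Γ.toContinuousMap)).2
        ⟨by ext t; simp [← hpr, hΓ], by simp⟩,
      ← (cov.eq_liftPath_iff' g0' (Γ := pr'.comp Γ'.toContinuousMap)).2
        ⟨by ext t; simp [← hpr, hΓ'], by simp⟩] at this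
    simpa using this
  exact Prod.ext (key ⟨Prod.fst, continuous_fst⟩ ⟨Prod.fst, continuous_fst⟩ fun p => rfl)
    (key ⟨Prod.snd, continuous_snd⟩ ⟨Prod.snd, continuous_snd⟩ fun p => rfl)

theorem ocE_homotopic {a b : Torus2} (γ γ' : Path a b)
    {e f : ℝ × ℝ} (Γ Γ' : Path e f) (hΓ : ∀ t, ocE (Γ t) = γ t)
    (hΓ' : ∀ t, ocE (Γ' t) = γ' t) : γ.Homotopic γ' := by
  have ha : a = ocE e := by rw [← γ.source, ← hΓ, Γ.source]
  have hb : b = ocE f := by rw [← γ.target, ← hΓ, Γ.target]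
  subst ha hb
  have h1 : γ = Γ.map ocE_continuous := by ext1; funext t; exact (hΓ t).symm
  have h2 : γ' = Γ'.map ocE_continuous := by ext1; funext t; exact (hΓ' t).symm
  rw [h1, h2]
  have : Γ.Homotopic Γ' := SimplyConnectedSpace.paths_homotopic Γ Γ'
  exact this.map ⟨ocE, ocE_continuous⟩

/-- The class `w` lifts to the translation by `z`. -/
def ocCls (e : ℝ × ℝ) (w : FundamentalGroup (TopCat.of Torus2) (ocE e)) (z : ℝ × ℝ) : Prop :=
  ∃ (γ : Path (ocE e) (ocE e)) (Γ : Path e (e + z)), (∀ t, ocE (Γ t) = γ t) ∧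
    FundamentalGroup.fromPath (X := TopCat.of Torus2) (x := ocE e) ⟦γ⟧ = w

theorem ocCls_exists (e : ℝ × ℝ) (w : FundamentalGroup (TopCat.of Torus2) (ocE e)) :
    ∃ z : ℤ × ℤ, ocCls e w ((z.1 : ℝ), (z.2 : ℝ)) := by
  obtain ⟨γ, hγ⟩ := Quotient.exists_rep (s := Path.Homotopic.setoid (X := Torus2) (ocE e) (ocE e)) w
  obtain ⟨Γ, h1, h2⟩ := ocE_lift γ.toContinuousMap e γ.source
  obtain ⟨z, hz⟩ := ocE_eq (Γ 1) e (by rw [h1]; exact γ.target)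
  exact ⟨z, γ, ⟨Γ, h2, hz⟩, h1, hγ⟩

theorem ocCls_surj (e : ℝ × ℝ) (z : ℤ × ℤ) :
    ∃ w, ocCls e w ((z.1 : ℝ), (z.2 : ℝ)) := by
  let Γ : Path e (e + ((z.1 : ℝ), (z.2 : ℝ))) := PathConnectedSpace.somePath _ _
  exact ⟨_, (Γ.map ocE_continuous).cast rfl (ocE_add_int e z).symm, Γ, fun t => rfl, rfl⟩

theorem ocCls_fwd (e : ℝ × ℝ) (w) (z z' : ℝ × ℝ) (h : ocCls e w z) (h' : ocCls e w z') :
    z = z' := by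
  obtain ⟨γ, Γ, h1, h2⟩ := h
  obtain ⟨γ', Γ', h1', h2'⟩ := h'
  have : γ.Homotopic γ' := Quotient.exact (h2.trans h2'.symm)
  exact add_left_cancel (ocE_homotopic_end γ γ' this Γ Γ' h1 h1')

theorem ocCls_bwd (e : ℝ × ℝ) (w w') (z : ℝ × ℝ) (h : ocCls e w z) (h' : ocCls e w' z) :
    w = w' := by
  obtain ⟨γ, Γ, h1, rfl⟩ := h
  obtain ⟨γ', Γ', h1', rfl⟩ := h'
  exact Quotient.sound (ocE_homotopic γ γ' Γ Γ' h1 h1')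

theorem ocCls_mul (e : ℝ × ℝ) (w w') (z z' : ℤ × ℤ) (h : ocCls e w ((z.1 : ℝ), (z.2 : ℝ)))
    (h' : ocCls e w' ((z'.1 : ℝ), (z'.2 : ℝ))) :
    ocCls e (w * w') (((z + z').1 : ℝ), ((z + z').2 : ℝ)) := by
  obtain ⟨γ, Γ, h1, rfl⟩ := h
  obtain ⟨γ', Γ', h1', rfl⟩ := h'
  let Γ2 := Γ.map (f := fun p => p + ((z'.1 : ℝ), (z'.2 : ℝ))) (by fun_prop)
  refine ⟨γ'.trans γ, (Γ'.trans Γ2).cast rfl ?_, ?_, rfl⟩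
  · ext <;> simp <;> ring
  · intro t
    simp only [Path.cast_coe, Path.trans_apply]
    split_ifs
    · exact h1' _
    · simp only [Γ2, Path.map_coe, Function.comp]
      rw [ocE_add_int]; exact h1 _

theorem ocCls_represents (e : ℝ × ℝ) (w) (z : ℤ × ℤ) (h : ocCls e w ((z.1 : ℝ), (z.2 : ℝ)))
    (S : Set Torus2) (p : ℝ × ℝ) (hp : JoinedIn (ocE ⁻¹' S) p (p + ((z.1 : ℝ), (z.2 : ℝ)))) :
    RepresentsIn (ocE e) w S := by
  obtain ⟨Γ, hΓ⟩ := hp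
  let P : Path e p := PathConnectedSpace.somePath _ _
  let P2 := P.symm.map (f := fun p => p + ((z.1 : ℝ), (z.2 : ℝ))) (by fun_prop)
  refine ⟨ocE p, (Γ.map ocE_continuous).cast rfl (ocE_add_int p z).symm, P.map ocE_continuous,
    ?_, ?_⟩
  · rintro _ ⟨t, rfl⟩
    exact hΓ t
  · refine ocCls_bwd e _ _ _ ⟨_, (P.trans Γ).trans P2, ?_, rfl⟩ h
    intro t
    simp only [Path.trans_apply]
    split_ifs
    · rfl
    · rfl
    · simp only [P2, Path.map_coe, Function.comp]
      rw [ocE_add_int]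
      rfl

theorem oc_hom (e : ℝ × ℝ) : ∃ Z : FundamentalGroup (TopCat.of Torus2) (ocE e) →*
    Multiplicative (ℤ × ℤ), Function.Surjective Z ∧
    ∀ w, ocCls e w (((Z w).toAdd.1 : ℝ), ((Z w).toAdd.2 : ℝ)) := by
  choose Z hZ using ocCls_exists e
  have huniq : ∀ w (z : ℤ × ℤ), ocCls e w ((z.1 : ℝ), (z.2 : ℝ)) → Z w = z := by
    intro w z h
    have := ocCls_fwd e w _ _ (hZ w) h
    rw [Prod.mk.injEq] at this
    exact Prod.ext (by exact_mod_cast this.1) (by exact_mod_cast this.2)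
  refine ⟨MonoidHom.mk' (fun w => Multiplicative.ofAdd (Z w)) ?_, ?_, ?_⟩
  · intro w w'
    rw [← ofAdd_add]
    congr 1
    exact huniq _ _ (ocCls_mul e w w' _ _ (hZ w) (hZ w'))
  · intro z
    obtain ⟨w, hw⟩ := ocCls_surj e z.toAdd
    exact ⟨w, congrArg Multiplicative.ofAdd (huniq w _ hw)⟩
  · intro w
    exact hZ w

/-- **A 1-complex blocking `v` off the torus must carry `u` homologically.**
Let `J` be a 1-complex on the torus and `u, v` a basis of `H₁(T; ℤ)`.  If
`T − J` contains no closed curve representing `v`, then `J` contains a closed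
curve representing `u^a * v^b` (i.e. `au + bv`) with `a ≠ 0`. -/
theorem one_complex_carries_u (x : TopCat.of Torus2)
    (u v : FundamentalGroup (TopCat.of Torus2) x)
    (hbasis : ∀ g : FundamentalGroup (TopCat.of Torus2) x,
      ∃! ab : ℤ × ℤ, g = u ^ ab.1 * v ^ ab.2)
    (J : Set Torus2) (hJ : IsOneComplex J)
    (hv : ¬ RepresentsIn x v Jᶜ) :
    ∃ a b : ℤ, a ≠ 0 ∧ RepresentsIn x (u ^ a * v ^ b) J := by
  by_contra hcon
  push Not at hcon
  obtain ⟨e, rfl⟩ := ocE_surj x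
  obtain ⟨Z, hZs, hZ⟩ := oc_hom e
  obtain ⟨u1, u2, hu⟩ : ∃ u1 u2 : ℤ, (Z u).toAdd = (u1, u2) := ⟨_, _, rfl⟩
  obtain ⟨v1, v2, hv'⟩ : ∃ v1 v2 : ℤ, (Z v).toAdd = (v1, v2) := ⟨_, _, rfl⟩
  have hZab : ∀ a b : ℤ, (Z (u ^ a * v ^ b)).toAdd = (a * u1 + b * v1, a * u2 + b * v2) := by
    intro a b
    rw [map_mul, map_zpow, map_zpow, toAdd_mul, toAdd_zpow, toAdd_zpow, hu, hv']
    simp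
  have hspan : ∀ z : ℤ × ℤ, ∃ a b : ℤ, (a * u1 + b * v1, a * u2 + b * v2) = z := by
    intro z
    obtain ⟨w, hw⟩ := hZs (Multiplicative.ofAdd z)
    obtain ⟨⟨a, b⟩, hab, -⟩ := hbasis w
    refine ⟨a, b, ?_⟩
    rw [← hZab]
    simp only at hab
    rw [← hab, hw]
    rfl
  obtain ⟨a, b, hab⟩ := hspan (1, 0)
  obtain ⟨c, d, hcd⟩ := hspan (0, 1)
  rw [Prod.mk.injEq] at hab hcd
  obtain ⟨E1, E2⟩ := hab
  obtain ⟨E3, E4⟩ := hcd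
  have F1 : (a * u1 + b * v1 : ℝ) = 1 := by exact_mod_cast E1
  have F2 : (a * u2 + b * v2 : ℝ) = 0 := by exact_mod_cast E2
  have F3 : (c * u1 + d * v1 : ℝ) = 0 := by exact_mod_cast E3
  have F4 : (c * u2 + d * v2 : ℝ) = 1 := by exact_mod_cast E4
  let A : ℝ × ℝ → ℝ × ℝ := fun p => (p.1 * u1 + p.2 * v1, p.1 * u2 + p.2 * v2)
  have hA : Continuous A := by fun_prop
  let A' : ℝ × ℝ → ℝ × ℝ := fun p => (p.1 * a + p.2 * c, p.1 * b + p.2 * d)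
  have hA' : Continuous A' := by fun_prop
  have hAA' : ∀ p, A (A' p) = p := by
    intro p
    ext
    · simp only [A, A']; linear_combination p.1 * F1 + p.2 * F3
    · simp only [A, A']; linear_combination p.1 * F2 + p.2 * F4
  have hdet : ((a * d - b * c) * (u1 * v2 - u2 * v1) : ℝ) = 1 := by
    linear_combination F1 * (c * u2 + d * v2) + F4 - F2 * (c * u1 + d * v1)
  have hAA : ∀ p, A' (A p) = p := by
    intro p
    have h := hAA' (A p)
    simp only [A, A', Prod.mk.injEq] at h ⊢
    obtain ⟨h1, h2⟩ := h
    ext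
    · simp only
      linear_combination (a * d - b * c : ℝ) * (v2 * h1 - v1 * h2) + (p.1 - ((p.1 * u1 + p.2 * v1) * a + (p.1 * u2 + p.2 * v2) * c)) * hdet
    · simp only
      linear_combination (a * d - b * c : ℝ) * (u1 * h2 - u2 * h1) + (p.2 - ((p.1 * u1 + p.2 * v1) * b + (p.1 * u2 + p.2 * v2) * d)) * hdet
  have hAadd : ∀ p (m k : ℤ), A (p + ((m : ℝ), (k : ℝ))) =
      A p + (((m * u1 + k * v1 : ℤ) : ℝ), ((m * u2 + k * v2 : ℤ) : ℝ)) := by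
    intro p m k
    ext <;> simp [A] <;> ring
  obtain ⟨n, s, f, γ, -, rfl⟩ := hJ
  have hl : ∀ i, ∃ Γ : C(unitInterval, ℝ × ℝ), ∀ t, ocE (Γ t) = γ i t := by
    intro i
    obtain ⟨q, hq⟩ := ocE_surj (γ i 0)
    obtain ⟨Γ, h1, -⟩ := ocE_lift (γ i).toContinuousMap q hq.symm
    exact ⟨Γ, h1⟩
  choose Γ hΓ using hl
  let Γ' : Fin n → C(unitInterval, ℝ × ℝ) := fun i => ⟨fun t => A' (Γ i t), by fun_prop⟩
  have hmem : ∀ p, p ∈ ocLift Γ' ↔ ocE (A p) ∈ ⋃ i, Set.range (γ i) := by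
    intro p
    rw [Set.mem_iUnion]
    constructor
    · rintro ⟨i, t, z, rfl⟩
      refine ⟨i, t, ?_⟩
      rw [hAadd]
      have := ocE_add_int (A (Γ' i t)) (z.1 * u1 + z.2 * v1, z.1 * u2 + z.2 * v2)
      rw [this]
      simp only [Γ', ContinuousMap.coe_mk, hAA', hΓ]
    · rintro ⟨i, t, h⟩
      rw [← hΓ] at h
      obtain ⟨z, hz⟩ := ocE_eq _ _ h.symm
      obtain ⟨m, k, hmk⟩ := hspan z
      refine ⟨i, t, (m, k), ?_⟩
      have : A p = A (Γ' i t + ((m : ℝ), (k : ℝ))) := by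
        rw [hAadd, hz, ← hmk]
        simp only [Γ', ContinuousMap.coe_mk, hAA']
      rw [← hAA p, this, hAA]
  have hjoin : ∀ S T p q, (∀ p ∈ S, A p ∈ T) → JoinedIn S p q → JoinedIn T (A p) (A q) := by
    rintro S T p q h ⟨g, hg⟩
    exact ⟨g.map hA, fun t => h _ (hg t)⟩
  obtain ⟨q, hq⟩ := oc_planar Γ' (by
    intro p m k h
    by_contra hm
    refine hcon m k hm ?_
    have h1 := hjoin _ (ocE ⁻¹' (⋃ i, Set.range (γ i))) _ _ (fun p hp => (hmem p).1 hp) h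
    rw [hAadd] at h1
    have h2 := hZ (u ^ m * v ^ k)
    rw [hZab] at h2
    exact ocCls_represents e _ (m * u1 + k * v1, m * u2 + k * v2) h2 _ _ h1)
  apply hv
  have h1 := hjoin (ocLift Γ')ᶜ (ocE ⁻¹' (⋃ i, Set.range (γ i))ᶜ) _ _ (fun p hp h => hp ((hmem p).2 h)) hq
  have h2 := hAadd q 0 1
  simp only [Int.cast_zero, Int.cast_one] at h2
  rw [h2] at h1
  have h3 := hZ v
  rw [hv'] at h3
  refine ocCls_represents e v (v1, v2) h3 _ (A q) ?_
  simpa only [zero_mul, one_mul, zero_add] using h1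
end

section
/- Let T be the 2-torus with H₁(T; ℤ) having basis u, v, and let J be a 1-complex on T. If J contains a closed curve representing au + bv with a ≠ 0, then J contains an embedded (simple) closed curve representing a'u + b'v with a' ≠ 0. -/
/-- A loop is simple (an embedded closed curve, i.e. injective as a map from
the circle) when two parameters with the same image are equal or are the two
endpoints. -/
def IsSimpleLoop {y : Torus2} (ℓ : Path y y) : Prop :=
  ∀ s t : unitInterval, ℓ s = ℓ t →
    s = t ∨ (s = 0 ∧ t = 1) ∨ (s = 1 ∧ t = 0)

/-- As `RepresentsIn`, but by an embedded (simple) closed curve. -/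
def RepresentsInEmbedded (x : TopCat.of Torus2)
    (w : FundamentalGroup (TopCat.of Torus2) x) (S : Set Torus2) : Prop :=
  ∃ (y : Torus2) (ℓ : Path y y) (p : Path x y),
    IsSimpleLoop ℓ ∧ Set.range ℓ ⊆ S ∧
    FundamentalGroup.fromPath ⟦(p.trans ℓ).trans p.symm⟧ = w

namespace TorusLoop

open unitInterval

/-- `γ` has a real lift along `f` with total increment `d`. -/
def Wd {X : Type} [TopologicalSpace X] (f : C(X, AddCircle (1 : ℝ))) {x y : X} (γ : Path x y)
    (d : ℝ) : Prop :=
  ∃ r : C(I, ℝ), (∀ t, ((r t : ℝ) : AddCircle (1 : ℝ)) = f (γ t)) ∧ r 1 - r 0 = d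

section
variable {X : Type} [TopologicalSpace X] (f : C(X, AddCircle (1 : ℝ)))

lemma coe_eq_iff (a b : ℝ) : ((a : AddCircle (1 : ℝ)) = (b : AddCircle (1 : ℝ))) ↔
    ∃ k : ℤ, a = b + k := by
  rw [← sub_eq_zero, ← AddCircle.coe_sub, AddCircle.coe_eq_zero_iff]
  constructor
  · rintro ⟨k, hk⟩
    refine ⟨k, ?_⟩
    simp at hk
    linarith
  · rintro ⟨k, hk⟩
    refine ⟨k, ?_⟩
    simp
    linarith

lemma exists_Wd {x y : X} (γ : Path x y) : ∃ d, Wd f γ d := by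
  obtain ⟨e, he⟩ := QuotientAddGroup.mk_surjective (f (γ 0))
  obtain ⟨r, hr, -⟩ := (AddCircle.isCoveringMap_coe (1 : ℝ)).exists_path_lifts
    (f.comp γ.toContinuousMap) e he.symm
  exact ⟨_, r, fun t => congr_fun hr t, rfl⟩

lemma Wd.homotopic {x y : X} {γ γ' : Path x y} {d e : ℝ} (h : γ.Homotopic γ') (hd : Wd f γ d)
    (he : Wd f γ' e) : d = e := by
  obtain ⟨r, hr, rfl⟩ := hd
  obtain ⟨s, hs, rfl⟩ := he
  have cov := AddCircle.isCoveringMap_coe (1 : ℝ)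
  let s' : C(I, ℝ) := ⟨fun t => s t + (r 0 - s 0), by fun_prop⟩
  have h0 : ((r 0 - s 0 : ℝ) : AddCircle (1 : ℝ)) = 0 := by
    rw [AddCircle.coe_sub, hr, hs]; simp
  have hH : (f.comp γ.toContinuousMap).HomotopicRel (f.comp γ'.toContinuousMap) {0, 1} := by
    exact ContinuousMap.HomotopicRel.comp_continuousMap h f
  have e1 : (f.comp γ.toContinuousMap) 0 = ((r 0 : ℝ) : AddCircle (1 : ℝ)) := (hr 0).symm
  have e2 : (f.comp γ'.toContinuousMap) 0 = ((r 0 : ℝ) : AddCircle (1 : ℝ)) := by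
    rw [hr 0]; simp
  have key := cov.liftPath_apply_one_eq_of_homotopicRel hH (r 0) e1 e2
  have a1 : r = cov.liftPath _ _ e1 := (cov.eq_liftPath_iff' e1).2 ⟨funext hr, rfl⟩
  have a2 : s' = cov.liftPath _ _ e2 := (cov.eq_liftPath_iff' e2).2 ⟨funext fun t => by
    change ((s t + (r 0 - s 0) : ℝ) : AddCircle (1 : ℝ)) = f (γ' t)
    rw [AddCircle.coe_add, h0, hs]; simp, by
    change s 0 + (r 0 - s 0) = r 0
    ring⟩
  rw [← a1, ← a2] at key
  change r 1 = s 1 + (r 0 - s 0) at key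
  linarith

lemma Wd.unique {x y : X} {γ : Path x y} {d e : ℝ} (hd : Wd f γ d)
    (he : Wd f γ e) : d = e := hd.homotopic f (Path.Homotopic.refl γ) he

lemma Wd.trans {x y z : X} {γ : Path x y} {γ' : Path y z} {d e : ℝ} (hd : Wd f γ d)
    (he : Wd f γ' e) : Wd f (γ.trans γ') (d + e) := by
  obtain ⟨r, hr, rfl⟩ := hd
  obtain ⟨s, hs, rfl⟩ := he
  have h0 : ((r 1 - s 0 : ℝ) : AddCircle (1 : ℝ)) = 0 := by
    rw [AddCircle.coe_sub, hr, hs]; simp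
  let p : Path (r 0) (r 1) := ⟨r, rfl, rfl⟩
  let q : Path (r 1) (s 1 + (r 1 - s 0)) := ⟨⟨fun t => s t + (r 1 - s 0), by fun_prop⟩, by
    simp, rfl⟩
  refine ⟨(p.trans q).toContinuousMap, fun t => ?_, ?_⟩
  · change (((p.trans q) t : ℝ) : AddCircle (1 : ℝ)) = _
    rw [Path.trans_apply, Path.trans_apply]
    split_ifs
    · exact hr _
    · change ((s _ + (r 1 - s 0) : ℝ) : AddCircle (1 : ℝ)) = _
      rw [AddCircle.coe_add, h0, hs]; simp
  · change (p.trans q) 1 - (p.trans q) 0 = _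
    simp; ring

lemma Wd.symm {x y : X} {γ : Path x y} {d : ℝ} (hd : Wd f γ d) : Wd f γ.symm (-d) := by
  obtain ⟨r, hr, rfl⟩ := hd
  refine ⟨⟨fun t => r (unitInterval.symm t), by fun_prop⟩, fun t => hr _, ?_⟩
  simp

lemma Wd.int {x : X} {γ : Path x x} {d : ℝ} (hd : Wd f γ d) : ∃ k : ℤ, d = k := by
  obtain ⟨r, hr, rfl⟩ := hd
  obtain ⟨k, hk⟩ := (coe_eq_iff (r 1) (r 0)).1 (by rw [hr, hr]; simp)
  exact ⟨k, by linarith⟩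

lemma Wd.comb {f g : C(X, AddCircle (1 : ℝ))} {x y : X} {γ : Path x y} {d e : ℝ} (hd : Wd f γ d)
    (he : Wd g γ e) (m n : ℤ) : Wd (m • f + n • g) γ (m * d + n * e) := by
  obtain ⟨r, hr, rfl⟩ := hd
  obtain ⟨s, hs, rfl⟩ := he
  refine ⟨m • r + n • s, fun t => ?_, ?_⟩
  · simp only [ContinuousMap.add_apply, ContinuousMap.smul_apply, AddCircle.coe_add, ← hr, ← hs]
    rfl
  · simp; ring

lemma exists_D (x : X) (g : FundamentalGroup X x) :
    ∃ d, ∀ γ : Path x x, FundamentalGroup.fromPath ⟦γ⟧ = g → Wd f γ d := by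
  obtain ⟨γ, rfl⟩ := Quotient.exists_rep g
  obtain ⟨d, hd⟩ := exists_Wd f γ
  refine ⟨d, fun γ' h => ?_⟩
  obtain ⟨e, he⟩ := exists_Wd f γ'
  have : γ'.Homotopic γ := Quotient.exact h
  rwa [← he.homotopic f this hd]

noncomputable def D (x : X) : FundamentalGroup X x →* Multiplicative ℝ :=
  MonoidHom.mk' (fun g => Multiplicative.ofAdd (exists_D f x g).choose) (by
    intro a b
    rw [← ofAdd_add]
    congr 1
    have ha := (exists_D f x a).choose_spec
    have hb := (exists_D f x b).choose_spec
    have hab := (exists_D f x (a * b)).choose_spec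
    obtain ⟨α, hα⟩ := Quotient.exists_rep a
    obtain ⟨β, hβ⟩ := Quotient.exists_rep b
    rw [add_comm]
    refine (hab (β.trans α) ?_).unique f ((hb β hβ).trans f (ha α hα))
    rw [FundamentalGroup.mul_def, ← hα, ← hβ]
    rfl)

lemma D_spec {x : X} (γ : Path x x) :
    Wd f γ (Multiplicative.toAdd (D f x (FundamentalGroup.fromPath ⟦γ⟧))) :=
  (exists_D f x _).choose_spec γ rfl

lemma D_zpow {x : X} (u v : FundamentalGroup X x) (a b : ℤ) :
    Multiplicative.toAdd (D f x (u ^ a * v ^ b)) =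
      a * Multiplicative.toAdd (D f x u) + b * Multiplicative.toAdd (D f x v) := by
  rw [map_mul, map_zpow, map_zpow, toAdd_mul, toAdd_zpow, toAdd_zpow, zsmul_eq_mul, zsmul_eq_mul]

end

/-- `p` and `q` are joined by an injective path in `K` (possibly degenerate). -/
def AC {E : Type} [TopologicalSpace E] (K : Set E) (p q : E) : Prop :=
  ∃ (L : ℝ) (g : ℝ → E), 0 ≤ L ∧ Continuous g ∧ g 0 = p ∧ g L = q ∧
    Set.InjOn g (Set.Icc 0 L) ∧ ∀ t ∈ Set.Icc 0 L, g t ∈ K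

section
variable {E : Type} [TopologicalSpace E] {K : Set E}

lemma AC.symm {p q : E} (h : AC K p q) : AC K q p := by
  obtain ⟨L, g, hL, hg, h0, h1, hi, hK⟩ := h
  refine ⟨L, fun t => g (L - t), hL, by fun_prop, by simpa, by simpa, ?_, ?_⟩
  · intro a ha b hb hab
    have := hi (x₁ := L - a) (x₂ := L - b) ⟨by linarith [ha.2], by linarith [ha.1]⟩
      ⟨by linarith [hb.2], by linarith [hb.1]⟩ hab
    linarith
  · intro t ht
    exact hK _ ⟨by linarith [ht.2], by linarith [ht.1]⟩

lemma AC.trans [T2Space E] {p q r : E} (h : AC K p q) (h' : AC K q r) : AC K p r := by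
  obtain ⟨L, g, hL, hg, h0, h1, hi, hK⟩ := h
  obtain ⟨M, k, hM, hk, k0, k1, ki, kK⟩ := h'
  have hcl : IsClosed (k '' Set.Icc 0 M) := (isCompact_Icc.image hk).isClosed
  have hcomp : IsCompact (Set.Icc 0 L ∩ g ⁻¹' (k '' Set.Icc 0 M)) :=
    isCompact_Icc.inter_right (hcl.preimage hg)
  obtain ⟨s, ⟨hs, t, ht, hts⟩, hmin⟩ := hcomp.exists_isLeast
    ⟨L, ⟨hL, le_rfl⟩, 0, ⟨le_rfl, hM⟩, by rw [k0, h1]⟩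
  have hmin' : ∀ a, 0 ≤ a → a ≤ L → ∀ b, 0 ≤ b → b ≤ M → g a = k b → s ≤ a :=
    fun a ha ha' b hb hb' e => hmin ⟨⟨ha, ha'⟩, b, ⟨hb, hb'⟩, e.symm⟩
  refine ⟨s + (M - t), fun x => if x ≤ s then g x else k (x - s + t), ?_, ?_, ?_, ?_, ?_, ?_⟩
  · linarith [hs.1, ht.2]
  · refine Continuous.if_le hg (by fun_prop) continuous_id continuous_const ?_
    rintro x rfl
    simp [hts]
  · simp [hs.1, h0]
  · by_cases hh : M - t ≤ 0
    · have : t = M := le_antisymm ht.2 (by linarith)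
      subst this
      simp [← hts, k1]
    · have : ¬ (s + (M - t) ≤ s) := by linarith
      simp only [this, if_false]
      rw [← k1]; congr 1; ring
  · intro a ha b hb hab
    have ht1 := ht.1
    have hs2 := hs.2
    dsimp only at hab
    split_ifs at hab with h1 h2 h2
    · exact hi ⟨ha.1, h1.trans hs.2⟩ ⟨hb.1, h2.trans hs.2⟩ hab
    · have hsa := hmin' a ha.1 (h1.trans hs.2) (b - s + t) (by linarith) (by linarith [hb.2]) hab
      have : a = s := le_antisymm h1 hsa
      subst this
      rw [← hts] at hab
      have := ki ht ⟨by linarith, by linarith [hb.2]⟩ hab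
      linarith
    · have hsb := hmin' b hb.1 (h2.trans hs.2) (a - s + t) (by linarith) (by linarith [ha.2])
        hab.symm
      have : b = s := le_antisymm h2 hsb
      subst this
      rw [← hts] at hab
      have := ki ⟨by linarith, by linarith [ha.2]⟩ ht hab
      linarith
    · have := ki ⟨by linarith, by linarith [ha.2]⟩ ⟨by linarith, by linarith [hb.2]⟩ hab
      linarith
  · intro x hx
    have ht1 := ht.1
    dsimp only
    split_ifs with h
    · exact hK _ ⟨hx.1, h.trans hs.2⟩
    · exact kK _ ⟨by linarith, by linarith [hx.2]⟩

/-- Two points on an injective path are joined by an arc. -/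
lemma AC.of_path (A : I → E) (hA : Continuous A) (hi : Function.Injective A)
    (hK : ∀ t, A t ∈ K) (a b : I) : AC K (A a) (A b) := by
  wlog hab : a ≤ b generalizing a b
  · exact (this b a (le_of_not_ge hab)).symm
  have hab' : (a : ℝ) ≤ b := hab
  have mem : ∀ x ∈ Set.Icc (0 : ℝ) (b - a), (a + x : ℝ) ∈ Set.Icc (0 : ℝ) 1 := fun x hx =>
    ⟨by linarith [hx.1, a.2.1], by linarith [hx.2, b.2.2]⟩
  refine ⟨b - a, fun x => A (Set.projIcc 0 1 zero_le_one (a + x)), by linarith, ?_, ?_, ?_, ?_, ?_⟩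
  · exact hA.comp (continuous_projIcc.comp (by fun_prop))
  · simp
  · simp
  · intro x hx y hy hxy
    have := hi hxy
    rw [Set.projIcc_of_mem _ (mem x hx), Set.projIcc_of_mem _ (mem y hy)] at this
    have := congrArg Subtype.val this
    dsimp only at this
    linarith
  · exact fun t _ => hK _

/-- If a path is covered by finitely many arcs then its endpoints are joined by an arc. -/
lemma AC.of_cover [T2Space E] {ι : Type} [Finite ι] (A : ι → I → E) (hA : ∀ i, Continuous (A i))
    (hi : ∀ i, Function.Injective (A i)) (hK : ∀ i t, A i t ∈ K)
    (c : I → E) (hc : Continuous c) (hcov : ∀ t, ∃ i, c t ∈ Set.range (A i)) :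
    AC K (c 0) (c 1) := by
  have hcl : ∀ i, IsClosed (c ⁻¹' (Set.range (A i))) := fun i =>
    (isCompact_range (hA i)).isClosed.preimage hc
  have key : ∀ Q : ι → Prop, IsClosed (⋃ i ∈ {i | Q i}, c ⁻¹' (Set.range (A i))) := fun Q =>
    (Set.toFinite _).isClosed_biUnion fun i _ => hcl i
  have hrel : ∀ i t, c t ∈ Set.range (A i) → (AC K (c 0) (c t) ↔ AC K (c 0) (A i 0)) := by
    rintro i t ⟨s, hs⟩
    have := AC.of_path (K := K) (A i) (hA i) (hi i) (hK i) 0 s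
    rw [hs] at this
    exact ⟨fun h => h.trans this.symm, fun h => h.trans this⟩
  have h1 : {t | AC K (c 0) (c t)} =
      ⋃ i ∈ {i | AC K (c 0) (A i 0)}, c ⁻¹' (Set.range (A i)) := by
    ext t
    simp only [Set.mem_ofPred_eq, Set.mem_iUnion, Set.mem_preimage, exists_prop]
    constructor
    · intro h
      obtain ⟨i, hi⟩ := hcov t
      exact ⟨i, (hrel i t hi).1 h, hi⟩
    · rintro ⟨i, h, hi⟩
      exact (hrel i t hi).2 h
  have h2 : {t | AC K (c 0) (c t)}ᶜ =
      ⋃ i ∈ {i | ¬ AC K (c 0) (A i 0)}, c ⁻¹' (Set.range (A i)) := by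
    ext t
    simp only [Set.mem_compl_iff, Set.mem_ofPred_eq, Set.mem_iUnion, Set.mem_preimage, exists_prop]
    constructor
    · intro h
      obtain ⟨i, hi⟩ := hcov t
      exact ⟨i, fun h' => h ((hrel i t hi).2 h'), hi⟩
    · rintro ⟨i, h, hi⟩ h'
      exact h ((hrel i t hi).1 h')
  have hclopen : IsClopen {t | AC K (c 0) (c t)} := by
    refine ⟨h1 ▸ key _, ?_⟩
    rw [← isClosed_compl_iff, h2]
    exact key _
  have h0 : AC K (c 0) (c 0) := by
    obtain ⟨i, s, hs⟩ := hcov 0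
    have := AC.of_path (K := K) (A i) (hA i) (hi i) (hK i) s s
    rwa [hs] at this
  have := hclopen.eq_univ ⟨0, h0⟩
  exact (this ▸ Set.mem_univ 1 : (1 : I) ∈ {t | AC K (c 0) (c t)})

end

lemma exists_bound (r : C(I, ℝ)) : ∃ M : ℝ, ∀ t, |r t| ≤ M :=
  ⟨‖r‖, fun t => r.norm_coe_le_norm t⟩

/-- Main geometric lemma: a loop in a finite union of arcs on which `f` winds nontrivially
yields an embedded loop on which `f` winds nontrivially. -/
lemma exists_simple {X : Type} [TopologicalSpace X] [T2Space X] (f : C(X, AddCircle (1 : ℝ)))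
    {n : ℕ} (a b : Fin n → X) (γ : ∀ i, Path (a i) (b i)) (hγ : ∀ i, Function.Injective (γ i))
    {y : X} (l : Path y y) (hl : Set.range l ⊆ ⋃ i, Set.range (γ i)) {d : ℝ} (hd : Wd f l d)
    (hd0 : d ≠ 0) :
    ∃ (y : X) (l : Path y y) (d : ℝ), (∀ s t : I, l s = l t →
      s = t ∨ (s = 0 ∧ t = 1) ∨ (s = 1 ∧ t = 0)) ∧ Set.range l ⊆ (⋃ i, Set.range (γ i)) ∧
      Wd f l d ∧ d ≠ 0 := by
  obtain ⟨r, hr, rfl⟩ := hd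
  choose d' hd' using fun i => exists_Wd f (γ i)
  choose ρ hρ _ using hd'
  obtain ⟨M, hM⟩ := exists_bound r
  choose N hN using fun i => exists_bound (ρ i)
  obtain ⟨N', hN'⟩ := (Set.finite_range N).bddAbove
  obtain ⟨B, hB⟩ := exists_nat_ge (M + N')
  let K : Set (X × ℝ) := {e | e.1 ∈ (⋃ i, Set.range (γ i)) ∧ ((e.2 : ℝ) : AddCircle (1 : ℝ)) = f e.1}
  have hAC : AC K (l 0, r 0) (l 1, r 1) := by
    refine AC.of_cover (ι := Fin n × Set.Icc (-(B : ℤ)) B)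
      (fun j t => (γ j.1 t, ρ j.1 t + (j.2 : ℤ))) ?_ ?_ ?_ (fun t => (l t, r t)) ?_ ?_
    · intro j; fun_prop
    · intro j s t hst
      exact hγ j.1 (congrArg Prod.fst hst)
    · intro j t
      refine ⟨Set.mem_iUnion.2 ⟨j.1, t, rfl⟩, ?_⟩
      rw [← hρ, coe_eq_iff]
      exact ⟨_, rfl⟩
    · fun_prop
    · intro t
      obtain ⟨i, s, hs⟩ := Set.mem_iUnion.1 (hl ⟨t, rfl⟩)
      obtain ⟨k, hk⟩ := (coe_eq_iff (r t) (ρ i s)).1 (by rw [hr, hρ, hs])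
      have h1 := abs_le.1 (hM t)
      have h2 := abs_le.1 (hN i s)
      have h3 : N i ≤ N' := hN' ⟨i, rfl⟩
      refine ⟨⟨i, k, ?_, ?_⟩, s, Prod.ext hs hk.symm⟩
      · have : (-(B : ℝ)) ≤ k := by linarith
        exact_mod_cast this
      · have : (k : ℝ) ≤ B := by linarith
        exact_mod_cast this
  obtain ⟨L, g, hL, hg, g0, gL, gi, gK⟩ := hAC
  have hgap : ∀ s ∈ Set.Icc 0 L, ∀ t ∈ Set.Icc 0 L, (g s).1 = (g t).1 → s ≠ t →
      1 ≤ |(g t).2 - (g s).2| := by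
    intro s hs t ht h hne
    obtain ⟨k, hk⟩ := (coe_eq_iff (g t).2 (g s).2).1 (by rw [(gK s hs).2, (gK t ht).2, h])
    have hk0 : k ≠ 0 := by
      rintro rfl
      exact hne (gi hs ht (Prod.ext h (by simpa using hk.symm)))
    rw [hk, add_sub_cancel_left]
    exact_mod_cast Int.one_le_abs hk0
  let P : Set (ℝ × ℝ) := (Set.Icc 0 L ×ˢ Set.Icc 0 L) ∩
    ({p | (g p.1).1 = (g p.2).1} ∩ {p | 1 ≤ |(g p.2).2 - (g p.1).2|})
  have hP : IsCompact P := by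
    refine (isCompact_Icc.prod isCompact_Icc).inter_right (IsClosed.inter ?_ ?_)
    · exact isClosed_eq (by fun_prop) (by fun_prop)
    · exact isClosed_le (by fun_prop) (by fun_prop)
  have hL0 : (0 : ℝ) ≠ L := by
    rintro rfl
    apply hd0
    have := congrArg Prod.snd (g0.symm.trans gL)
    dsimp only at this
    rw [this, sub_self]
  have hPne : P.Nonempty := by
    refine ⟨(0, L), ⟨⟨le_rfl, hL⟩, ⟨hL, le_rfl⟩⟩, ?_, ?_⟩
    · simp [g0, gL]
    · exact hgap 0 ⟨le_rfl, hL⟩ L ⟨hL, le_rfl⟩ (by simp [g0, gL]) hL0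
  obtain ⟨⟨s, t⟩, hst, hmin⟩ := hP.exists_isMinOn hPne
    (f := fun p : ℝ × ℝ => |p.2 - p.1|) (by fun_prop)
  have hmin' : ∀ p ∈ P, |t - s| ≤ |p.2 - p.1| := fun p hp => hmin hp
  wlog hle : s ≤ t generalizing s t
  · refine this t s ⟨⟨hst.1.2, hst.1.1⟩, hst.2.1.symm, ?_⟩ ?_ ?_ (le_of_not_ge hle)
    · have := hst.2.2
      simp only [Set.mem_ofPred_eq] at this ⊢
      rwa [abs_sub_comm]
    · intro p hp
      simpa [abs_sub_comm] using hmin' p hp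
    · intro p hp
      rw [abs_sub_comm]; exact hmin' p hp
  obtain ⟨⟨hs, ht⟩, h1, h2⟩ := hst
  simp only [Set.mem_ofPred_eq] at hs ht h1 h2
  have hlt : s < t := by
    refine lt_of_le_of_ne hle ?_
    rintro rfl
    norm_num at h2
  rw [abs_of_pos (sub_pos.2 hlt)] at hmin'
  have mem : ∀ x : I, s + x * (t - s) ∈ Set.Icc 0 L := by
    intro x
    have := mul_nonneg x.2.1 (sub_pos.2 hlt).le
    have := mul_le_of_le_one_left (sub_pos.2 hlt).le x.2.2
    exact ⟨by linarith [hs.1], by linarith [ht.2]⟩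
  let l' : Path (g s).1 (g s).1 := ⟨⟨fun x => (g (s + x * (t - s))).1, by fun_prop⟩, by simp, by
    simp [h1]⟩
  have hl' : ∀ x, l' x = (g (s + x * (t - s))).1 := fun x => rfl
  refine ⟨_, l', (g t).2 - (g s).2, ?_, ?_, ?_, ?_⟩
  · intro x y hxy
    by_contra! hcon
    obtain ⟨hne, hc1, hc2⟩ := hcon
    have hne' : s + x * (t - s) ≠ s + y * (t - s) := by
      intro h
      apply hne
      have := mul_right_cancel₀ (sub_pos.2 hlt).ne' (add_left_cancel h)
      exact Subtype.ext this
    have := hmin' (s + x * (t - s), s + y * (t - s)) ⟨⟨mem x, mem y⟩, hxy,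
      hgap _ (mem x) _ (mem y) hxy hne'⟩
    have e : (s + y * (t - s)) - (s + x * (t - s)) = ((y : ℝ) - x) * (t - s) := by ring
    dsimp only at this
    rw [e, abs_mul, abs_of_pos (sub_pos.2 hlt)] at this
    have h3 : 1 ≤ |(y : ℝ) - x| := by
      by_contra! h
      nlinarith [sub_pos.2 hlt]
    have hx := x.2
    have hy := y.2
    rcases le_abs.1 h3 with h | h
    · exact hc1 (Subtype.ext (le_antisymm (by simp only [Set.Icc.coe_zero, Set.Icc.coe_one]; linarith [hx.1, hx.2, hy.1, hy.2])
          (by simp only [Set.Icc.coe_zero, Set.Icc.coe_one]; linarith [hx.1, hx.2, hy.1, hy.2])))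
        (Subtype.ext (le_antisymm (by simp only [Set.Icc.coe_zero, Set.Icc.coe_one]; linarith [hx.1, hx.2, hy.1, hy.2])
          (by simp only [Set.Icc.coe_zero, Set.Icc.coe_one]; linarith [hx.1, hx.2, hy.1, hy.2])))
    · exact hc2 (Subtype.ext (le_antisymm (by simp only [Set.Icc.coe_zero, Set.Icc.coe_one]; linarith [hx.1, hx.2, hy.1, hy.2])
          (by simp only [Set.Icc.coe_zero, Set.Icc.coe_one]; linarith [hx.1, hx.2, hy.1, hy.2])))
        (Subtype.ext (le_antisymm (by simp only [Set.Icc.coe_zero, Set.Icc.coe_one]; linarith [hx.1, hx.2, hy.1, hy.2])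
          (by simp only [Set.Icc.coe_zero, Set.Icc.coe_one]; linarith [hx.1, hx.2, hy.1, hy.2])))
  · rintro _ ⟨x, rfl⟩
    exact (gK _ (mem x)).1
  · refine ⟨⟨fun x => (g (s + x * (t - s))).2, by fun_prop⟩, fun x => (gK _ (mem x)).2, ?_⟩
    simp
  · intro h
    rw [h] at h2
    norm_num at h2

/-- Straight loops realize every bidegree. -/
lemma exists_loop (x : AddCircle (1 : ℝ) × AddCircle (1 : ℝ)) (i j : ℤ) :
    ∃ γ : Path x x, Wd ContinuousMap.fst γ i ∧ Wd ContinuousMap.snd γ j := by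
  obtain ⟨p, hp⟩ := QuotientAddGroup.mk_surjective x.1
  obtain ⟨q, hq⟩ := QuotientAddGroup.mk_surjective x.2
  let r : C(I, ℝ) := ⟨fun t => p + t * i, by fun_prop⟩
  let s : C(I, ℝ) := ⟨fun t => q + t * j, by fun_prop⟩
  have hc : Continuous ((↑) : ℝ → AddCircle (1 : ℝ)) := AddCircle.continuous_mk' 1
  have e1 : ∀ (z : ℝ) (k : ℤ), ((z + k : ℝ) : AddCircle (1 : ℝ)) = z := fun z k =>
    (coe_eq_iff _ _).2 ⟨k, rfl⟩
  refine ⟨⟨⟨fun t => ((r t : AddCircle (1 : ℝ)), (s t : AddCircle (1 : ℝ))), by fun_prop⟩, ?_, ?_⟩,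
    ⟨r, fun t => rfl, ?_⟩, ⟨s, fun t => rfl, ?_⟩⟩
  · refine Prod.ext ?_ ?_
    · simpa [r] using hp
    · simpa [s] using hq
  · refine Prod.ext ?_ ?_
    · simpa [r, e1] using hp
    · simpa [s, e1] using hq
  · simp [r]
  · simp [s]

lemma main_aux (x : Torus2) (u v : FundamentalGroup Torus2 x)
    (hbasis : ∀ g : FundamentalGroup Torus2 x, ∃ ab : ℤ × ℤ, g = u ^ ab.1 * v ^ ab.2)
    (J : Set Torus2) (hJ : IsOneComplex J)
    (a b : ℤ) (ha : a ≠ 0)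
    (hrep : ∃ (y : Torus2) (l : Path y y) (p : Path x y),
      Set.range l ⊆ J ∧ FundamentalGroup.fromPath ⟦(p.trans l).trans p.symm⟧ = u ^ a * v ^ b) :
    ∃ a' b' : ℤ, a' ≠ 0 ∧ ∃ (y : Torus2) (l : Path y y) (p : Path x y),
      IsSimpleLoop l ∧ Set.range l ⊆ J ∧
      FundamentalGroup.fromPath ⟦(p.trans l).trans p.symm⟧ = u ^ a' * v ^ b' := by
  obtain ⟨n, α, β, γ, hγ, rfl⟩ := hJ
  let f₁ : C(Torus2, AddCircle (1 : ℝ)) := ContinuousMap.fst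
  let f₂ : C(Torus2, AddCircle (1 : ℝ)) := ContinuousMap.snd
  obtain ⟨γu, hu⟩ : ∃ γu : Path x x, FundamentalGroup.fromPath ⟦γu⟧ = u := Quotient.exists_rep u
  obtain ⟨γv, hv⟩ : ∃ γv : Path x x, FundamentalGroup.fromPath ⟦γv⟧ = v := Quotient.exists_rep v
  have hu1 := D_spec f₁ γu
  have hu2 := D_spec f₂ γu
  have hv1 := D_spec f₁ γv
  have hv2 := D_spec f₂ γv
  obtain ⟨u1, eu1⟩ := hu1.int
  obtain ⟨u2, eu2⟩ := hu2.int
  obtain ⟨v1, ev1⟩ := hv1.int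
  obtain ⟨v2, ev2⟩ := hv2.int
  rw [eu1] at hu1
  rw [eu2] at hu2
  rw [ev1] at hv1
  rw [ev2] at hv2
  rw [hu] at eu1 eu2
  rw [hv] at ev1 ev2
  let f := v2 • f₁ + (-v1) • f₂
  have fu : Multiplicative.toAdd (D f x u) = v2 * u1 - v1 * u2 := by
    have := (D_spec f γu).unique f (hu1.comb hu2 v2 (-v1))
    rw [hu] at this
    rw [this]; push_cast; ring
  have fv : Multiplicative.toAdd (D f x v) = 0 := by
    have := (D_spec f γv).unique f (hv1.comb hv2 v2 (-v1))
    rw [hv] at this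
    rw [this]; push_cast; ring
  have hdet : (v2 * u1 - v1 * u2 : ℝ) ≠ 0 := by
    intro h0
    have hrep' : ∀ i j : ℤ, ∃ c d : ℤ, (i : ℝ) = c * u1 + d * v1 ∧ (j : ℝ) = c * u2 + d * v2 := by
      intro i j
      obtain ⟨δ, h1, h2⟩ := exists_loop x i j
      obtain ⟨⟨c, d⟩, hcd⟩ := hbasis (FundamentalGroup.fromPath ⟦δ⟧)
      refine ⟨c, d, ?_, ?_⟩
      · rw [← eu1, ← ev1, ← D_zpow, ← hcd]
        exact h1.unique _ (D_spec f₁ δ)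
      · rw [← eu2, ← ev2, ← D_zpow, ← hcd]
        exact h2.unique _ (D_spec f₂ δ)
    obtain ⟨c, d, h1, h2⟩ := hrep' 1 0
    obtain ⟨c', d', h3, h4⟩ := hrep' 0 1
    push_cast at h1 h2 h3 h4
    have : (1 : ℝ) * 1 - 0 * 0 = (c * d' - d * c') * (v2 * u1 - v1 * u2) := by
      nth_rewrite 1 [h1]
      rw [h4]
      nth_rewrite 1 [h2]
      rw [h3]
      ring
    rw [h0] at this
    norm_num at this
  have hD : ∀ c d : ℤ, Multiplicative.toAdd (D f x (u ^ c * v ^ d)) =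
      c * (v2 * u1 - v1 * u2 : ℝ) := by
    intro c d
    rw [D_zpow, fu, fv]; ring
  have hconj : ∀ {y : Torus2} (l : Path y y) (p : Path x y) (e : ℝ), Wd f l e →
      Multiplicative.toAdd (D f x (FundamentalGroup.fromPath ⟦(p.trans l).trans p.symm⟧)) = e := by
    intro y l p e he
    obtain ⟨e', he'⟩ := exists_Wd f p
    have := (D_spec f ((p.trans l).trans p.symm)).unique f ((he'.trans f he).trans f (he'.symm f))
    rw [this]; ring
  obtain ⟨y, l, p, hl, hcl⟩ := hrep
  obtain ⟨e, he⟩ := exists_Wd f l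
  have h1 := hconj l p e he
  rw [hcl, hD] at h1
  have he0 : e ≠ 0 := by
    rw [← h1]
    exact mul_ne_zero (by exact_mod_cast ha) hdet
  obtain ⟨y', l', e', hs, hr, hw, hne⟩ := exists_simple f α β γ hγ l hl he he0
  let p' : Path x y' := PathConnectedSpace.somePath x y'
  obtain ⟨⟨a', b'⟩, hab⟩ := hbasis (FundamentalGroup.fromPath ⟦(p'.trans l').trans p'.symm⟧)
  refine ⟨a', b', ?_, y', l', p', hs, hr, hab⟩
  rintro rfl
  have h2 := hconj l' p' e' hw
  rw [hab, hD] at h2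
  apply hne
  rw [← h2]; simp

end TorusLoop

/-- **From a representative to an embedded representative.**  Let `J` be a
1-complex on the torus and `u, v` a basis of `H₁(T; ℤ)`.  If `J` contains a
closed curve representing `u^a * v^b` (i.e. `au + bv`) with `a ≠ 0`, then `J`
contains an embedded closed curve representing `u^{a'} * v^{b'}` with
`a' ≠ 0`. -/
theorem embedded_representative_of_representative (x : TopCat.of Torus2)
    (u v : FundamentalGroup (TopCat.of Torus2) x)
    (hbasis : ∀ g : FundamentalGroup (TopCat.of Torus2) x,
      ∃! ab : ℤ × ℤ, g = u ^ ab.1 * v ^ ab.2)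
    (J : Set Torus2) (hJ : IsOneComplex J)
    (a b : ℤ) (ha : a ≠ 0) (hrep : RepresentsIn x (u ^ a * v ^ b) J) :
    ∃ a' b' : ℤ, a' ≠ 0 ∧ RepresentsInEmbedded x (u ^ a' * v ^ b') J := by
  exact TorusLoop.main_aux x u v (fun g => (hbasis g).exists) J hJ a b ha hrep
end
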